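/- Let Φ be a shuffle and let f be an excursion with B_f ∩ 𝔹(Φ) = ∅. Then the map g ↦ d̃_V[g], from the set of excursions equipped with the Skorokhod distance ρ to D([0,1]²) equipped with ρ₂, is continuous at f: for every ε > 0 there is η > 0 such that every excursion g with ρ(f,g) ≤ η satisfies ρ₂(d̃_V[f], d̃_V[g]) ≤ ε. -/

import Mathlib

open Set Filter Topology
open scoped Classical

noncomputable section

/-- Left limit of `f` at `t`, with the convention `f(0−) = 0`. -/
def lm (f : ℝ → ℝ) (t : ℝ) : ℝ := if t = 0 then 0 else Function.leftLim f t

/-- The jump `Δ_t(f) = f t − f(t−)`. -/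
def jump (f : ℝ → ℝ) (t : ℝ) : ℝ := f t - lm f t

/-- `inf_{[s,t]} f`. -/
def infIcc (f : ℝ → ℝ) (s t : ℝ) : ℝ := sInf (f '' Icc s t)

/-- An excursion: a càdlàg function on `[0,1]`, nonnegative, vanishing at `1` (and
extended by `0` outside `[0,1]`), all of whose jumps are nonnegative. -/
structure IsExcursion (f : ℝ → ℝ) : Prop where
  nonneg : ∀ t ∈ Icc (0:ℝ) 1, 0 ≤ f t
  zero_outside : ∀ t, t ∉ Icc (0:ℝ) 1 → f t = 0
  rightCont : ∀ t ∈ Ico (0:ℝ) 1, Tendsto f (𝓝[>] t) (𝓝 (f t))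
  leftLimEx : ∀ t ∈ Ioc (0:ℝ) 1, Tendsto f (𝓝[<] t) (𝓝 (Function.leftLim f t))
  one : f 1 = 0
  jump_nonneg : ∀ t ∈ Icc (0:ℝ) 1, 0 ≤ jump f t

/-- The genealogical relation `s ⪯_f t` : `s ≤ t` and `f(s−) ≤ inf_{[s,t]} f`. -/
def pre (f : ℝ → ℝ) (s t : ℝ) : Prop := s ≤ t ∧ lm f s ≤ infIcc f s t

/-- `x_s^t(f) = 1_{s ≤ t} · max(inf_{[s,t]} f − f(s−), 0)`. -/
def xst (f : ℝ → ℝ) (s t : ℝ) : ℝ := if s ≤ t then max (infIcc f s t - lm f s) 0 else 0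

/-- The most recent common ancestor `s ∧_f t`. -/
def mrca (f : ℝ → ℝ) (s t : ℝ) : ℝ := sSup {r : ℝ | 0 ≤ r ∧ pre f r s ∧ pre f r t}

/-- `δ_t(a,b) = min(|a−b|, Δ_t(f) − |a−b|)`, the circle pseudo-distance on `[0, Δ_t(f)]`. -/
def cdel (f : ℝ → ℝ) (t a b : ℝ) : ℝ := min |a - b| (jump f t - |a - b|)

/-- `d_O(s,t) = ∑_{s ≺_f r ⪯_f t} δ_r(0, x_r^t)`. -/
def dO (f : ℝ → ℝ) (s t : ℝ) : ℝ :=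
  ∑' r : ℝ, if pre f s r ∧ s < r ∧ pre f r t then cdel f r 0 (xst f r t) else 0

/-- `d_T(s,t) = f t − inf_{[s,t]} f − ∑_{s ≺_f r ⪯_f t} x_r^t`, intended for `s ⪯_f t`. -/
def dTanc (f : ℝ → ℝ) (s t : ℝ) : ℝ :=
  f t - infIcc f s t - ∑' r : ℝ, if pre f s r ∧ s < r ∧ pre f r t then xst f r t else 0

/-- The looptree pseudo-distance `d_L[f]`. -/
def dL (f : ℝ → ℝ) (s t : ℝ) : ℝ :=
  cdel f (mrca f s t) (xst f (mrca f s t) s) (xst f (mrca f s t) t)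
    + dO f (mrca f s t) s + dO f (mrca f s t) t

/-- The tree pseudo-distance `d_T[f]`. -/
def dT (f : ℝ → ℝ) (s t : ℝ) : ℝ := dTanc f (mrca f s t) s + dTanc f (mrca f s t) t

/-- The vernation pseudo-distance `d_V[f] = d_T[f] + 2·d_L[f]`. -/
def dV (f : ℝ → ℝ) (s t : ℝ) : ℝ := dT f s t + 2 * dL f s t

/-- `Jf(t) = ∑_{r ⪯_f t} x_r^t(f)`. -/
def Jop (f : ℝ → ℝ) (t : ℝ) : ℝ := ∑' r : ℝ, if pre f r t then xst f r t else 0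

/-- `J^ε f(t) = ∑_{r ⪯_f t, Δ_r(f) ≥ ε} x_r^t(f)`. -/
def Jeps (f : ℝ → ℝ) (ε : ℝ) (t : ℝ) : ℝ :=
  ∑' r : ℝ, if pre f r t ∧ ε ≤ jump f r then xst f r t else 0

/-- Pure jump growth (PJG) excursion: `f(t) = ∑_{r ⪯_f t} x_r^t(f)` on `[0,1]`. -/
def IsPJG (f : ℝ → ℝ) : Prop := ∀ t ∈ Icc (0:ℝ) 1, f t = Jop f t

/-- An increasing bijection from `[0,1]` onto itself. -/
def IncBij (l : ℝ → ℝ) : Prop :=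
  StrictMonoOn l (Icc (0:ℝ) 1) ∧ Set.BijOn l (Icc (0:ℝ) 1) (Icc (0:ℝ) 1)

/-- The Skorokhod distance `ρ` on functions `[0,1] → ℝ`. -/
def skor (f g : ℝ → ℝ) : ℝ :=
  sInf {c : ℝ | 0 ≤ c ∧ ∃ l : ℝ → ℝ, IncBij l ∧
    ∀ x ∈ Icc (0:ℝ) 1, |l x - x| ≤ c ∧ |f x - g (l x)| ≤ c}

/-- The distance on the circle `𝒞` of perimeter 1, seen as `[0,1]` with `0 ∼ 1`. -/
def cdist (a b : ℝ) : ℝ := min |a - b| (1 - |a - b|)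

/-- A shuffle: for each `Δ > 0`, a surjective càglàd function `φ_Δ : [0,1] → 𝒞`
satisfying the two quantitative conditions of Definition 2.2. -/
structure IsShuffle (φ : ℝ → ℝ → ℝ) : Prop where
  mapsTo : ∀ Δ > (0:ℝ), ∀ x ∈ Icc (0:ℝ) 1, φ Δ x ∈ Icc (0:ℝ) 1
  surj : ∀ Δ > (0:ℝ), ∀ y ∈ Icc (0:ℝ) 1, ∃ x ∈ Icc (0:ℝ) 1, cdist (φ Δ x) y = 0
  leftCont : ∀ Δ > (0:ℝ), ∀ x ∈ Ioc (0:ℝ) 1,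
      Tendsto (fun y => cdist (φ Δ y) (φ Δ x)) (𝓝[<] x) (𝓝 0)
  rightLim : ∀ Δ > (0:ℝ), ∀ x ∈ Ico (0:ℝ) 1, ∃ L ∈ Icc (0:ℝ) 1,
      Tendsto (fun y => cdist (φ Δ y) L) (𝓝[>] x) (𝓝 0)
  bdd : ∀ Δ > (0:ℝ), ∃ M : ℝ, ∀ u ∈ Ioc (0:ℝ) Δ, ∀ x ∈ Ioc (0:ℝ) 1,
      |(2 / x) * cdist (φ u 0) (φ u x) - 1| ≤ M
  small : ∀ ν > (0:ℝ), ∃ Δ₀ > (0:ℝ), ∀ Δ : ℝ, 0 < Δ → Δ ≤ Δ₀ → ∀ x ∈ Ioc (0:ℝ) 1,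
      |(2 / x) * cdist (φ Δ 0) (φ Δ x) - 1| ≤ ν

/-- The shuffled circle pseudo-distance
`δ̃_t(a,b) = Δ_t·δ(φ_{Δ_t}(a/Δ_t), φ_{Δ_t}(b/Δ_t))`. -/
def tdel (φ : ℝ → ℝ → ℝ) (f : ℝ → ℝ) (t a b : ℝ) : ℝ :=
  if 0 < jump f t then
    jump f t * cdist (φ (jump f t) (a / jump f t)) (φ (jump f t) (b / jump f t))
  else 0

/-- `d̃_O(s,t) = ∑_{s ≺_f r ⪯_f t} δ̃_r(0, x_r^t)`. -/
def tdO (φ : ℝ → ℝ → ℝ) (f : ℝ → ℝ) (s t : ℝ) : ℝ :=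
  ∑' r : ℝ, if pre f s r ∧ s < r ∧ pre f r t then tdel φ f r 0 (xst f r t) else 0

/-- The shuffled looptree pseudo-distance `d̃_L[f]`. -/
def tdL (φ : ℝ → ℝ → ℝ) (f : ℝ → ℝ) (s t : ℝ) : ℝ :=
  tdel φ f (mrca f s t) (xst f (mrca f s t) s) (xst f (mrca f s t) t)
    + tdO φ f (mrca f s t) s + tdO φ f (mrca f s t) t

/-- The shuffled vernation pseudo-distance `d̃_V[f] = d_T[f] + 2·d̃_L[f]`. -/
def tdV (φ : ℝ → ℝ → ℝ) (f : ℝ → ℝ) (s t : ℝ) : ℝ := dT f s t + 2 * tdL φ f s t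

/-- Skorokhod distance between càglàd `𝒞`-valued functions on `[0,1]`. -/
def skorC (p q : ℝ → ℝ) : ℝ :=
  sInf {c : ℝ | 0 ≤ c ∧ ∃ l : ℝ → ℝ, IncBij l ∧
    ∀ x ∈ Icc (0:ℝ) 1, |l x - x| ≤ c ∧ cdist (p x) (q (l x)) ≤ c}

/-- The distance `ρ₂` on bivariate functions on `[0,1]²`. -/
def rho2 (p q : ℝ → ℝ → ℝ) : ℝ :=
  sInf {c : ℝ | 0 ≤ c ∧ ∃ l m : ℝ → ℝ, IncBij l ∧ IncBij m ∧
    (∀ x ∈ Icc (0:ℝ) 1, |l x - x| ≤ c ∧ |m x - x| ≤ c) ∧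
    ∀ s ∈ Icc (0:ℝ) 1, ∀ t ∈ Icc (0:ℝ) 1, |p s t - q (l s) (m t)| ≤ c}

/-- Continuity of `Δ ↦ φ_Δ` at `Δ` for the Skorokhod topology. -/
def PhiContAt (φ : ℝ → ℝ → ℝ) (Δ : ℝ) : Prop :=
  ∀ ν > (0:ℝ), ∃ κ > (0:ℝ), ∀ u : ℝ, 0 < u → |u - Δ| ≤ κ → skorC (φ u) (φ Δ) ≤ ν

/-- Continuity of the `𝒞`-valued function `p` at `x` within `[0,1]`. -/
def phiContAt (p : ℝ → ℝ) (x : ℝ) : Prop :=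
  ∀ ν > (0:ℝ), ∃ κ > (0:ℝ), ∀ y ∈ Icc (0:ℝ) 1, |y - x| ≤ κ → cdist (p y) (p x) ≤ ν

/-!
For an excursion `f`, `d̃_V[f](s,t)` is the sum of `f(s) + f(t) - 2 inf f`, the infimum being over
the interval between `s` and `t`, and of the terms `2 δ̃_r(x_r^s, x_r^t) - |x_r^s - x_r^t|` over the
jump times `r`. The first part is stable under uniform perturbations of `f`. Except at the most
recent common ancestor, one of the two positions in a term is the root of the loop, and small loops
are almost not distorted near their root; since `∑_r x_r^t ≤ f(t)`, the small jumps contribute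
little to the sum, uniformly in `s`, `t` and in excursions close to `f`.

This leaves finitely many loops. On each of them the shuffle has finitely many discontinuities of
non-negligible size, and the assumption on `f` says that each is visited at a single time `T`, where
`f` does not jump. An excursion close to `f` crosses the corresponding discontinuity of its own loop
at a time close to `T`, so that a time change that fixes the large jumps of `f` and sends each `T`
to this crossing time keeps the positions on the shuffled loops close to each other. As the times
`T` of distinct loops are distinct, one time change close to the identity does this for all loops.
-/

section

variable {f g : ℝ → ℝ} {r s t u : ℝ}

theorem lm_zero (f : ℝ → ℝ) : lm f 0 = 0 := if_pos rfl

theorem le_infIcc {c : ℝ} (hst : s ≤ t) (h : ∀ u ∈ Icc s t, c ≤ f u) : c ≤ infIcc f s t :=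
  le_csInf ((nonempty_Icc.2 hst).image f) (forall_mem_image.2 h)

theorem infIcc_self (f : ℝ → ℝ) (s : ℝ) : infIcc f s s = f s := by
  simp [infIcc]

namespace IsExcursion

theorem apply_nonneg (hf : IsExcursion f) (t : ℝ) : 0 ≤ f t := by
  by_cases h : t ∈ Icc (0 : ℝ) 1
  · exact hf.nonneg t h
  · exact (hf.zero_outside t h).ge

theorem eventuallyEq_zero (hf : IsExcursion f) (ht : t ∉ Icc (0 : ℝ) 1) : f =ᶠ[𝓝 t] 0 := by
  filter_upwards [isClosed_Icc.isOpen_compl.mem_nhds ht] with u hu using hf.zero_outside u hu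

theorem tendsto_right (hf : IsExcursion f) (t : ℝ) : Tendsto f (𝓝[>] t) (𝓝 (f t)) := by
  by_cases ht : t ∈ Icc (0 : ℝ) 1
  · rcases ht.2.eq_or_lt with rfl | ht1
    · rw [hf.one]
      refine tendsto_const_nhds.congr' ?_
      filter_upwards [self_mem_nhdsWithin] with u hu
      exact (hf.zero_outside u fun hu' => hu'.2.not_gt hu).symm
    · exact hf.rightCont t ⟨ht.1, ht1⟩
  · rw [hf.zero_outside t ht]
    exact tendsto_const_nhds.congr' ((hf.eventuallyEq_zero ht).symm.filter_mono nhdsWithin_le_nhds)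

theorem tendsto_left (hf : IsExcursion f) (t : ℝ) : Tendsto f (𝓝[<] t) (𝓝 (lm f t)) := by
  by_cases ht : t ∈ Ioc (0 : ℝ) 1
  · rw [lm, if_neg ht.1.ne']
    exact hf.leftLimEx t ht
  · have hzero : ∀ᶠ u in 𝓝[<] t, f u = 0 := by
      by_cases ht' : t ∈ Icc (0 : ℝ) 1
      · obtain rfl : t = 0 := by_contra fun h => ht ⟨ht'.1.lt_of_ne' h, ht'.2⟩
        filter_upwards [self_mem_nhdsWithin] with u hu
        exact hf.zero_outside u fun hu' => hu'.1.not_gt hu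
      · exact (hf.eventuallyEq_zero ht').filter_mono nhdsWithin_le_nhds
    have hlim : Tendsto f (𝓝[<] t) (𝓝 0) :=
      tendsto_const_nhds.congr' (hzero.mono fun u hu => hu.symm)
    rwa [lm, leftLim_eq_of_tendsto hlim, ite_self]

theorem lm_eq_leftLim (hf : IsExcursion f) : lm f = Function.leftLim f :=
  funext fun t => (leftLim_eq_of_tendsto (hf.tendsto_left t)).symm

theorem lm_eq_of_tendsto (hf : IsExcursion f) {y : ℝ} (h : Tendsto f (𝓝[<] t) (𝓝 y)) :
    lm f t = y :=
  tendsto_nhds_unique (hf.tendsto_left t) h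

theorem tendsto_lm_left (hf : IsExcursion f) (t : ℝ) :
    Tendsto (lm f) (𝓝[<] t) (𝓝 (lm f t)) := by
  have h := hf.tendsto_left t
  rw [hf.lm_eq_leftLim] at h ⊢
  exact (continuousWithinAt_leftLim_Iic h).mono_left (nhdsWithin_mono t Iio_subset_Iic_self)

theorem lm_nonneg (hf : IsExcursion f) (t : ℝ) : 0 ≤ lm f t :=
  ge_of_tendsto' (hf.tendsto_left t) hf.apply_nonneg

theorem zero_le_jump (hf : IsExcursion f) (t : ℝ) : 0 ≤ jump f t := by
  by_cases ht : t ∈ Icc (0 : ℝ) 1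
  · exact hf.jump_nonneg t ht
  · have hlim : Tendsto f (𝓝[<] t) (𝓝 0) :=
      tendsto_const_nhds.congr' ((hf.eventuallyEq_zero ht).symm.filter_mono nhdsWithin_le_nhds)
    rw [jump, hf.zero_outside t ht, hf.lm_eq_of_tendsto hlim, sub_zero]

theorem lm_le (hf : IsExcursion f) (t : ℝ) : lm f t ≤ f t := sub_nonneg.1 (hf.zero_le_jump t)

theorem jump_le (hf : IsExcursion f) (t : ℝ) : jump f t ≤ f t := sub_le_self _ (hf.lm_nonneg t)

theorem mem_Ico_of_jump_pos (hf : IsExcursion f) (h : 0 < jump f t) : t ∈ Ico (0 : ℝ) 1 := by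
  have hpos : 0 < f t := h.trans_le (hf.jump_le t)
  have hmem : t ∈ Icc (0 : ℝ) 1 := by_contra fun hn => hpos.ne' (hf.zero_outside t hn)
  exact ⟨hmem.1, hmem.2.lt_of_ne fun ht => hpos.ne' (ht ▸ hf.one)⟩

theorem upperSemicontinuous (hf : IsExcursion f) : UpperSemicontinuous f := by
  intro t c hc
  rw [← nhdsNE_sup_pure t, ← nhdsLT_sup_nhdsGT, eventually_sup, eventually_sup]
  exact ⟨⟨(hf.tendsto_left t).eventually_lt_const ((hf.lm_le t).trans_lt hc),
    (hf.tendsto_right t).eventually_lt_const hc⟩, hc⟩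

theorem exists_bound (hf : IsExcursion f) : ∃ C > 0, ∀ t, f t ≤ C := by
  obtain ⟨C, hC⟩ :=
    (hf.upperSemicontinuous.upperSemicontinuousOn _).bddAbove_of_isCompact isCompact_Icc
  refine ⟨max C 1, by positivity, fun t => ?_⟩
  by_cases ht : t ∈ Icc (0 : ℝ) 1
  · exact (hC (mem_image_of_mem f ht)).trans (le_max_left C 1)
  · rw [hf.zero_outside t ht]
    positivity

/-! ### Running infima -/

theorem infIcc_le (hf : IsExcursion f) (hu : u ∈ Icc s t) : infIcc f s t ≤ f u :=
  csInf_le ⟨0, forall_mem_image.2 fun x _ => hf.apply_nonneg x⟩ (mem_image_of_mem f hu)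

theorem infIcc_nonneg (hf : IsExcursion f) (hst : s ≤ t) : 0 ≤ infIcc f s t :=
  le_infIcc hst fun u _ => hf.apply_nonneg u

theorem infIcc_le_lm (hf : IsExcursion f) (hr : r ∈ Ioc s t) : infIcc f s t ≤ lm f r := by
  refine ge_of_tendsto (hf.tendsto_left r) ?_
  filter_upwards [Ioo_mem_nhdsLT hr.1] with x hx
  exact hf.infIcc_le ⟨hx.1.le, hx.2.le.trans hr.2⟩

theorem infIcc_eq_min (hf : IsExcursion f) (hsu : s ≤ u) (hut : u ≤ t) :
    infIcc f s t = min (infIcc f s u) (infIcc f u t) := by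
  refine le_antisymm
    (le_min (le_infIcc hsu fun v hv => hf.infIcc_le ⟨hv.1, hv.2.trans hut⟩)
      (le_infIcc hut fun v hv => hf.infIcc_le ⟨hsu.trans hv.1, hv.2⟩))
    (le_infIcc (hsu.trans hut) fun v hv => ?_)
  rcases le_total v u with h | h
  · exact (min_le_left _ _).trans (hf.infIcc_le ⟨hv.1, h⟩)
  · exact (min_le_right _ _).trans (hf.infIcc_le ⟨h, hv.2⟩)

theorem infIcc_anti (hf : IsExcursion f) (hsu : s ≤ u) (hut : u ≤ t) :
    infIcc f s t ≤ infIcc f s u :=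
  le_infIcc hsu fun _ hv => hf.infIcc_le ⟨hv.1, hv.2.trans hut⟩

theorem continuousOn_infIcc (hf : IsExcursion f) (r : ℝ) :
    ContinuousOn (fun t => infIcc f r t) (Ici r) := by
  intro t (hrt : r ≤ t)
  refine tendsto_order.2 ⟨fun c hc => ?_, fun c hc => ?_⟩
  · obtain ⟨c', hcc', hc'⟩ := exists_between hc
    have hright : ∀ᶠ v in 𝓝[>] t, c' < f v :=
      (hf.tendsto_right t).eventually_const_lt (hc'.trans_le (hf.infIcc_le ⟨hrt, le_rfl⟩))
    obtain ⟨d, htd, hd⟩ := mem_nhdsGT_iff_exists_Ioo_subset.1 hright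
    filter_upwards [self_mem_nhdsWithin, nhdsWithin_le_nhds (Iio_mem_nhds htd)]
      with u hru hud
    refine hcc'.trans_le (le_infIcc hru fun v hv => ?_)
    rcases le_or_gt v t with hvt | hvt
    · exact hc'.le.trans (hf.infIcc_le ⟨hv.1, hvt⟩)
    · exact le_of_lt (hd ⟨hvt, hv.2.trans_lt hud⟩)
  · obtain ⟨_, ⟨v, hv, rfl⟩, hvc⟩ := exists_lt_of_csInf_lt ((nonempty_Icc.2 hrt).image f) hc
    rcases hv.2.eq_or_lt with rfl | hvt
    · filter_upwards [self_mem_nhdsWithin, nhdsWithin_le_nhds (hf.upperSemicontinuous v c hvc)]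
        with u hru hu using (hf.infIcc_le ⟨hru, le_rfl⟩).trans_lt hu
    · filter_upwards [nhdsWithin_le_nhds (Ioi_mem_nhds hvt)] with u hu
      exact (hf.infIcc_le ⟨hv.1, le_of_lt hu⟩).trans_lt hvc

theorem exists_last_lt (hf : IsExcursion f) {c : ℝ} (hus : u ≤ s) (hu : f u < c) (hs : c ≤ f s) :
    ∃ r ∈ Ioc u s, lm f r ≤ c ∧ ∀ v ∈ Icc r s, c ≤ f v := by
  set B := {v | v ∈ Icc u s ∧ f v < c}
  have huB : u ∈ B := ⟨⟨le_rfl, hus⟩, hu⟩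
  have hlub : IsLUB B (sSup B) := isLUB_csSup ⟨u, huB⟩ ⟨s, fun v hv => hv.1.2⟩
  set r := sSup B
  have hur : u ≤ r := hlub.1 huB
  have hrs : r ≤ s := hlub.2 fun v hv => hv.1.2
  have hafter : ∀ v ∈ Ioc r s, c ≤ f v := fun v hv => not_lt.1 fun hvc =>
    (hlub.1 ⟨⟨hur.trans hv.1.le, hv.2⟩, hvc⟩).not_gt hv.1
  have hr : c ≤ f r := by
    rcases hrs.eq_or_lt with h | h
    · rwa [h]
    · refine ge_of_tendsto (hf.tendsto_right r) ?_
      filter_upwards [Ioo_mem_nhdsGT h] with v hv using hafter v ⟨hv.1, hv.2.le⟩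
  have hlm : lm f r ≤ c := by
    have hfreq : ∃ᶠ v in 𝓝[≤] r, f v < c := (hlub.frequently_mem ⟨u, huB⟩).mono fun v hv => hv.2
    rw [← Iio_insert, nhdsWithin_insert, frequently_sup, frequently_pure] at hfreq
    exact le_of_tendsto_of_frequently (hf.tendsto_left r)
      ((hfreq.resolve_left hr.not_gt).mono fun v hv => hv.le)
  refine ⟨r, ⟨hur.lt_of_ne fun h => hr.not_gt (h ▸ hu), hrs⟩, hlm, fun v hv => ?_⟩
  rcases hv.1.eq_or_lt with h | h
  exacts [h ▸ hr, hafter v ⟨h, hv.2⟩]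

theorem abs_infIcc_sub_le (hf : IsExcursion f) (hg : IsExcursion g) {c : ℝ} (hst : s ≤ t)
    (h : ∀ u ∈ Icc s t, |f u - g u| ≤ c) : |infIcc f s t - infIcc g s t| ≤ c := by
  refine abs_sub_le_iff.2 ⟨sub_le_comm.1 (le_infIcc hst fun u hu => ?_),
    sub_le_comm.1 (le_infIcc hst fun u hu => ?_)⟩
  · linarith [hf.infIcc_le hu, (abs_le.1 (h u hu)).2]
  · linarith [hg.infIcc_le hu, (abs_le.1 (h u hu)).1]

theorem abs_lm_sub_le (hf : IsExcursion f) (hg : IsExcursion g) {c : ℝ}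
    (h : ∀ s, |f s - g s| ≤ c) (t : ℝ) : |lm f t - lm g t| ≤ c :=
  le_of_tendsto' ((hf.tendsto_left t).sub (hg.tendsto_left t)).abs h

theorem abs_jump_sub_le (hf : IsExcursion f) (hg : IsExcursion g) {c : ℝ}
    (h : ∀ s, |f s - g s| ≤ c) (t : ℝ) : |jump f t - jump g t| ≤ 2 * c := by
  rw [jump, jump, sub_sub_sub_comm, two_mul]
  exact (abs_sub _ _).trans (add_le_add (h t) (hf.abs_lm_sub_le hg h t))

end IsExcursion

/-! ### Positions on the loops -/

theorem xst_nonneg (f : ℝ → ℝ) (r t : ℝ) : 0 ≤ xst f r t := by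
  unfold xst
  split_ifs
  exacts [le_max_right _ _, le_rfl]

theorem xst_of_lt (h : t < r) : xst f r t = 0 := if_neg h.not_ge

theorem xst_of_pre (h : pre f r t) : xst f r t = infIcc f r t - lm f r := by
  rw [xst, if_pos h.1, max_eq_left (sub_nonneg.2 h.2)]

theorem xst_of_not_pre (h : ¬pre f r t) : xst f r t = 0 := by
  unfold xst
  split_ifs with hrt
  · exact max_eq_right (sub_nonpos.2 (not_le.1 fun h' => h ⟨hrt, h'⟩).le)
  · rfl

theorem pre_of_xst_pos (h : 0 < xst f r t) : pre f r t :=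
  by_contra fun hn => h.ne' (xst_of_not_pre hn)

namespace IsExcursion

theorem xst_self (hf : IsExcursion f) (r : ℝ) : xst f r r = jump f r := by
  rw [xst, if_pos le_rfl, infIcc_self, max_eq_left (sub_nonneg.2 (hf.lm_le r)), jump]

theorem xst_anti (hf : IsExcursion f) (hrs : r ≤ s) (hst : s ≤ t) : xst f r t ≤ xst f r s := by
  rw [xst, if_pos (hrs.trans hst), xst, if_pos hrs]
  gcongr
  exact hf.infIcc_anti hrs hst

theorem xst_le_jump (hf : IsExcursion f) (r t : ℝ) : xst f r t ≤ jump f r := by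
  rcases le_or_gt r t with h | h
  · exact (hf.xst_anti le_rfl h).trans_eq (hf.xst_self r)
  · exact (xst_of_lt h).trans_le (hf.zero_le_jump r)

theorem xst_one (hf : IsExcursion f) (r : ℝ) : xst f r 1 = 0 := by
  unfold xst
  split_ifs with h
  · refine max_eq_right (sub_nonpos.2 ?_)
    exact (hf.infIcc_le ⟨h, le_rfl⟩).trans (hf.one.trans_le (hf.lm_nonneg r))
  · rfl

theorem abs_xst_sub_le (hf : IsExcursion f) (hg : IsExcursion g) {c : ℝ}
    (h : ∀ s, |f s - g s| ≤ c) (r t : ℝ) : |xst f r t - xst g r t| ≤ 2 * c := by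
  unfold xst
  split_ifs with hrt
  · refine (abs_max_sub_max_le_abs _ _ _).trans ?_
    rw [sub_sub_sub_comm, two_mul]
    exact (abs_sub _ _).trans
      (add_le_add (hf.abs_infIcc_sub_le hg hrt fun u _ => h u) (hf.abs_lm_sub_le hg h r))
  · simpa using (abs_nonneg _).trans (h r)

theorem continuousOn_xst (hf : IsExcursion f) (r : ℝ) :
    ContinuousOn (fun t => xst f r t) (Ici r) :=
  (((hf.continuousOn_infIcc r).sub continuousOn_const).sup continuousOn_const).congr
    fun _ ht => if_pos ht

theorem xst_eq_of_pre (hf : IsExcursion f) (hru : r < u) (h : pre f u t) :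
    xst f r t = xst f r u := by
  rw [xst, if_pos (hru.le.trans h.1), xst, if_pos hru.le, hf.infIcc_eq_min hru.le h.1,
    min_eq_left ((hf.infIcc_le_lm ⟨hru, le_rfl⟩).trans h.2)]

theorem sum_xst_le (hf : IsExcursion f) (S : Finset ℝ) (t : ℝ) : ∑ r ∈ S, xst f r t ≤ f t := by
  induction S using Finset.induction_on_max generalizing t with
  | empty => simpa using hf.apply_nonneg t
  | insert a S ha ih =>
    rw [Finset.sum_insert fun h => (ha a h).false]
    rcases (xst_nonneg f a t).eq_or_lt with h | h
    · rw [← h, zero_add]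
      exact ih t
    · have hpre := pre_of_xst_pos h
      have hlm : ∑ r ∈ S, xst f r a ≤ lm f a := by
        refine ge_of_tendsto (hf.tendsto_left a) ?_
        have hS : ∀ᶠ v in 𝓝[<] a, ∀ r ∈ S, r < v :=
          S.eventually_all.2 fun r hr => mem_of_superset (Ioo_mem_nhdsLT (ha r hr)) fun v hv => hv.1
        filter_upwards [hS, self_mem_nhdsWithin] with v hv hva
        exact (Finset.sum_le_sum fun r hr => hf.xst_anti (hv r hr).le (le_of_lt hva)).trans (ih v)
      rw [Finset.sum_congr rfl fun r hr => hf.xst_eq_of_pre (ha r hr) hpre, xst_of_pre hpre]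
      linarith [hf.infIcc_le ⟨hpre.1, le_rfl⟩]

theorem summable_xst (hf : IsExcursion f) (t : ℝ) : Summable fun r => xst f r t :=
  summable_of_sum_le (fun r => xst_nonneg f r t) fun S => hf.sum_xst_le S t

theorem tsum_xst_le (hf : IsExcursion f) (t : ℝ) : ∑' r, xst f r t ≤ f t :=
  (hf.summable_xst t).tsum_le_of_sum_le fun S => hf.sum_xst_le S t

end IsExcursion

/-! ### The most recent common ancestor -/

theorem mrca_comm (f : ℝ → ℝ) (s t : ℝ) : mrca f s t = mrca f t s := by
  simp only [mrca, and_comm (a := pre f _ s)]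

theorem le_mrca (h0 : 0 ≤ r) (hs : pre f r s) (ht : pre f r t) : r ≤ mrca f s t :=
  le_csSup ⟨s, fun _ hx => hx.2.1.1⟩ ⟨h0, hs, ht⟩

namespace IsExcursion

theorem pre_zero (hf : IsExcursion f) (ht : 0 ≤ t) : pre f 0 t :=
  ⟨ht, (lm_zero f).trans_le (hf.infIcc_nonneg ht)⟩

theorem pre_of_isLUB (hf : IsExcursion f) {A : Set ℝ} {m : ℝ} (hm : IsLUB A m)
    (hA : A.Nonempty) (h : ∀ r ∈ A, pre f r t) : pre f m t := by
  have hfreq := hm.frequently_mem hA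
  rw [← Iio_insert, nhdsWithin_insert, frequently_sup, frequently_pure] at hfreq
  rcases hfreq with hmA | hfreq
  · exact h m hmA
  · have hmt : m ≤ t := hm.2 fun r hr => (h r hr).1
    refine ⟨hmt, le_infIcc hmt fun u hu => ?_⟩
    refine le_of_tendsto_of_frequently (hf.tendsto_lm_left m) (hfreq.mono fun r hr => ?_)
    exact (h r hr).2.trans (hf.infIcc_le ⟨(hm.1 hr).trans hu.1, hu.2⟩)

theorem mrca_spec (hf : IsExcursion f) (hs : 0 ≤ s) (ht : 0 ≤ t) :
    0 ≤ mrca f s t ∧ pre f (mrca f s t) s ∧ pre f (mrca f s t) t := by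
  have h0 := hf.pre_zero hs
  have h0' := hf.pre_zero ht
  have hlub : IsLUB {r | 0 ≤ r ∧ pre f r s ∧ pre f r t} (mrca f s t) :=
    isLUB_csSup ⟨0, le_rfl, h0, h0'⟩ ⟨s, fun _ hr => hr.2.1.1⟩
  exact ⟨le_mrca le_rfl h0 h0', hf.pre_of_isLUB hlub ⟨0, le_rfl, h0, h0'⟩ fun r hr => hr.2.1,
    hf.pre_of_isLUB hlub ⟨0, le_rfl, h0, h0'⟩ fun r hr => hr.2.2⟩

theorem infIcc_le_infIcc_mrca (hf : IsExcursion f) (hs : 0 ≤ s) (hst : s ≤ t) :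
    infIcc f s t ≤ infIcc f (mrca f s t) s := by
  obtain ⟨hm, hms, -⟩ := hf.mrca_spec hs (hs.trans hst)
  refine le_infIcc hms.1 fun u hu => not_lt.1 fun hlt => ?_
  obtain ⟨r, hr, hlm, hge⟩ := hf.exists_last_lt hu.2 hlt (hf.infIcc_le ⟨le_rfl, hst⟩)
  -- `r` is a common ancestor of `s` and `t` beyond the most recent one
  have hrs : pre f r s := ⟨hr.2, hlm.trans (le_infIcc hr.2 hge)⟩
  have hrt : pre f r t := ⟨hr.2.trans hst, by
    rw [hf.infIcc_eq_min hr.2 hst]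
    exact le_min hrs.2 hlm⟩
  exact (le_mrca (hm.trans (hu.1.trans hr.1.le)) hrs hrt).not_gt (hu.1.trans_lt hr.1)

theorem min_infIcc_mrca (hf : IsExcursion f) (hs : 0 ≤ s) (ht : 0 ≤ t) :
    min (infIcc f (mrca f s t) s) (infIcc f (mrca f s t) t) =
      infIcc f (min s t) (max s t) := by
  wlog hst : s ≤ t generalizing s t
  · rw [mrca_comm, min_comm, this ht hs (not_le.1 hst).le, min_comm t, max_comm t]
  obtain ⟨-, hms, -⟩ := hf.mrca_spec hs ht
  rw [min_eq_left hst, max_eq_right hst, min_eq_right (hf.infIcc_anti hms.1 hst),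
    hf.infIcc_eq_min hms.1 hst, min_eq_right (hf.infIcc_le_infIcc_mrca hs hst)]

theorem xst_eq_or_eq_zero (hf : IsExcursion f) (hs : 0 ≤ s) (ht : 0 ≤ t)
    (hr : r ≠ mrca f s t) : xst f r s = xst f r t ∨ xst f r s = 0 ∨ xst f r t = 0 := by
  obtain ⟨hm, hms, hmt⟩ := hf.mrca_spec hs ht
  rcases hr.lt_or_gt with h | h
  · left
    rw [hf.xst_eq_of_pre h hms, hf.xst_eq_of_pre h hmt]
  · right
    by_contra! hcon
    have hrs : pre f r s := pre_of_xst_pos ((xst_nonneg f r s).lt_of_ne' hcon.1)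
    have hrt : pre f r t := pre_of_xst_pos ((xst_nonneg f r t).lt_of_ne' hcon.2)
    exact (le_mrca (hm.trans h.le) hrs hrt).not_gt h

end IsExcursion

/-! ### Shuffles -/

theorem cdist_eq_dist {a b : ℝ} (ha : a ∈ Icc (0 : ℝ) 1) (hb : b ∈ Icc (0 : ℝ) 1) :
    cdist a b = dist (a : UnitAddCircle) b := by
  wlog hab : b ≤ a generalizing a b
  · rw [dist_comm, ← this hb ha (le_of_not_ge hab), cdist, cdist, abs_sub_comm]
  rw [dist_eq_norm, ← AddCircle.coe_sub, UnitAddCircle.norm_eq, abs_sub_round_eq_min, cdist,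
    abs_of_nonneg (sub_nonneg.2 hab)]
  rcases (show a - b ≤ 1 by linarith [ha.2, hb.1]).eq_or_lt with h | h
  · rw [h, Int.fract_one, sub_self, sub_zero, min_comm]
  · rw [Int.fract_eq_self.2 ⟨sub_nonneg.2 hab, h⟩]

theorem cdist_self (a : ℝ) : cdist a a = 0 := by simp [cdist]

theorem cdist_comm (a b : ℝ) : cdist a b = cdist b a := by rw [cdist, cdist, abs_sub_comm]

/-- The relative distortion of `p`, seen as a map from the circle of perimeter one to itself, near
its root: up to the error `ν`, the point `x` is mapped at distance `x / 2` from the image of `0`. -/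
def RootDistortionLE (p : ℝ → ℝ) (ν : ℝ) : Prop :=
  ∀ x ∈ Ioc (0 : ℝ) 1, |2 / x * cdist (p 0) (p x) - 1| ≤ ν

/-- A preshuffle satisfies all the requirements on a shuffle, except that the maps `φ Δ` need not be
surjective onto the circle. For instance `φ Δ x = x / 2` is a preshuffle. -/
structure IsPreshuffle (φ : ℝ → ℝ → ℝ) : Prop where
  mapsTo : ∀ Δ > 0, MapsTo (φ Δ) (Icc 0 1) (Icc 0 1)
  leftCont : ∀ Δ > 0, ∀ x ∈ Ioc (0 : ℝ) 1,
    Tendsto (fun y => cdist (φ Δ y) (φ Δ x)) (𝓝[<] x) (𝓝 0)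
  rightLim : ∀ Δ > 0, ∀ x ∈ Ico (0 : ℝ) 1, ∃ L ∈ Icc (0 : ℝ) 1,
    Tendsto (fun y => cdist (φ Δ y) L) (𝓝[>] x) (𝓝 0)
  bdd : ∀ Δ > 0, ∃ M, ∀ u ∈ Ioc 0 Δ, RootDistortionLE (φ u) M
  small : ∀ ν > 0, ∃ Δ₀ > 0, ∀ u ∈ Ioc 0 Δ₀, RootDistortionLE (φ u) ν

theorem IsShuffle.isPreshuffle {φ : ℝ → ℝ → ℝ} (hφ : IsShuffle φ) : IsPreshuffle φ where
  mapsTo := hφ.mapsTo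
  leftCont := hφ.leftCont
  rightLim := hφ.rightLim
  bdd := hφ.bdd
  small ν hν := (hφ.small ν hν).imp fun _ h => ⟨h.1, fun u hu => h.2 u hu.1 hu.2⟩

/-- The position of `t` on the loop of `f` at `r`, rescaled to perimeter one. It is `0` when `f`
does not jump at `r`. -/
def loopPos (f : ℝ → ℝ) (r t : ℝ) : ℝ := xst f r t / jump f r

/-- The point of the unit circle to which the shuffle `φ` sends the position of `t` on the loop of
`f` at `r`. -/
def loopPoint (φ : ℝ → ℝ → ℝ) (f : ℝ → ℝ) (r t : ℝ) : UnitAddCircle :=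
  (φ (jump f r) (loopPos f r t) : ℝ)

variable {φ : ℝ → ℝ → ℝ}

theorem IsExcursion.loopPos_mem (hf : IsExcursion f) (r t : ℝ) : loopPos f r t ∈ Icc (0 : ℝ) 1 :=
  ⟨div_nonneg (xst_nonneg f r t) (hf.zero_le_jump r),
    div_le_one_of_le₀ (hf.xst_le_jump r t) (hf.zero_le_jump r)⟩

theorem tdel_comm (φ : ℝ → ℝ → ℝ) (f : ℝ → ℝ) (r a b : ℝ) :
    tdel φ f r a b = tdel φ f r b a := by
  rw [tdel, tdel, cdist_comm]

theorem tdel_self (φ : ℝ → ℝ → ℝ) (f : ℝ → ℝ) (r a : ℝ) : tdel φ f r a a = 0 := by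
  simp [tdel, cdist_self]

theorem tdel_xst_xst (hφ : IsPreshuffle φ) (hf : IsExcursion f) (r s t : ℝ) :
    tdel φ f r (xst f r s) (xst f r t) =
      jump f r * dist (loopPoint φ f r s) (loopPoint φ f r t) := by
  rcases (hf.zero_le_jump r).eq_or_lt with h | h
  · rw [tdel, ← h, if_neg (lt_irrefl _), zero_mul]
  · rw [tdel, if_pos h]
    exact congrArg (jump f r * ·) (cdist_eq_dist (hφ.mapsTo _ h (hf.loopPos_mem r s))
      (hφ.mapsTo _ h (hf.loopPos_mem r t)))

theorem abs_two_mul_tdel_zero_sub_le (hf : IsExcursion f) {ν : ℝ}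
    (hν : 0 < jump f r → RootDistortionLE (φ (jump f r)) ν) (t : ℝ) :
    |2 * tdel φ f r 0 (xst f r t) - xst f r t| ≤ ν * xst f r t := by
  rcases (xst_nonneg f r t).eq_or_lt with hx | hx
  · rw [← hx, tdel_self]
    simp
  · have hJ : 0 < jump f r := hx.trans_le (hf.xst_le_jump r t)
    have hle := hν hJ (xst f r t / jump f r) ⟨div_pos hx hJ, (hf.loopPos_mem r t).2⟩
    rw [tdel, if_pos hJ, zero_div]
    set c := cdist (φ (jump f r) 0) (φ (jump f r) (xst f r t / jump f r))
    have hfactor : 2 * (jump f r * c) - xst f r t =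
        (2 / (xst f r t / jump f r) * c - 1) * xst f r t := by
      field_simp
    rw [hfactor, abs_mul, abs_of_pos hx]
    gcongr

/-! ### The vernation distance as a sum over loops -/

/-- The contribution to the shuffled vernation distance between `s` and `t` of the loop of `f` at
`r`: the loop distance counts twice, and replaces the height difference on the tree. -/
def loopTerm (φ : ℝ → ℝ → ℝ) (f : ℝ → ℝ) (s t r : ℝ) : ℝ :=
  2 * tdel φ f r (xst f r s) (xst f r t) - |xst f r s - xst f r t|

theorem loopTerm_comm (φ : ℝ → ℝ → ℝ) (f : ℝ → ℝ) (s t r : ℝ) :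
    loopTerm φ f s t r = loopTerm φ f t s r := by
  rw [loopTerm, loopTerm, tdel_comm, abs_sub_comm]

theorem summable_ite_zero {ι : Type*} {F : ι → ℝ} (hF : Summable F) (P : ι → Prop)
    [DecidablePred P] : Summable fun i => if P i then F i else 0 :=
  (hF.indicator {i | P i}).congr fun i => by simp [indicator_apply]

/-- A sum over all loops splits along the two branches leaving the most recent common ancestor. -/
theorem IsExcursion.apply_xst_xst_eq (hf : IsExcursion f) (hs : 0 ≤ s) (ht : 0 ≤ t)
    {D : ℝ → ℝ → ℝ → ℝ} (hself : ∀ r a, D r a a = 0) (hcomm : ∀ r a b, D r a b = D r b a)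
    (r : ℝ) :
    D r (xst f r s) (xst f r t) =
      (if r = mrca f s t then
        D (mrca f s t) (xst f (mrca f s t) s) (xst f (mrca f s t) t) else 0) +
      (if pre f (mrca f s t) r ∧ mrca f s t < r ∧ pre f r s then D r 0 (xst f r s) else 0) +
      (if pre f (mrca f s t) r ∧ mrca f s t < r ∧ pre f r t then D r 0 (xst f r t) else 0) := by
  obtain ⟨hm, hms, hmt⟩ := hf.mrca_spec hs ht
  have hle : 0 ≤ r → pre f r s → pre f r t → r ≤ mrca f s t := le_mrca
  set m := mrca f s t
  rcases lt_trichotomy r m with h | rfl | h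
  · simp [hf.xst_eq_of_pre h hms, hf.xst_eq_of_pre h hmt, hself, h.ne, h.not_gt]
  · simp
  · have hmr : ∀ v, pre f m v → pre f r v → pre f m r := fun v hmv hrv =>
      ⟨h.le, hmv.2.trans (hf.infIcc_anti h.le hrv.1)⟩
    by_cases hrs : pre f r s
    · have hrt : ¬pre f r t := fun hrt => (hle (hm.trans h.le) hrs hrt).not_gt h
      simp [h, h.ne', hrs, hrt, hmr s hms hrs, xst_of_not_pre hrt, hcomm r 0]
    · by_cases hrt : pre f r t
      · simp [h, h.ne', hrs, hrt, hmr t hmt hrt, xst_of_not_pre hrs]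
      · simp [h.ne', hrs, hrt, xst_of_not_pre hrs, xst_of_not_pre hrt, hself]

theorem summable_tdel_zero (hφ : IsPreshuffle φ) (hf : IsExcursion f) (t : ℝ) :
    Summable fun r => tdel φ f r 0 (xst f r t) := by
  obtain ⟨C, hC, hfC⟩ := hf.exists_bound
  obtain ⟨M, hM⟩ := hφ.bdd C hC
  have hdiff : Summable fun r => 2 * tdel φ f r 0 (xst f r t) - xst f r t :=
    Summable.of_norm_bounded ((hf.summable_xst t).mul_left M) fun r =>
      abs_two_mul_tdel_zero_sub_le hf (fun h => hM _ ⟨h, (hf.jump_le r).trans (hfC r)⟩) t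
  exact ((hdiff.add (hf.summable_xst t)).div_const 2).congr fun r => by ring

theorem hasSum_tdel (hφ : IsPreshuffle φ) (hf : IsExcursion f) (hs : 0 ≤ s) (ht : 0 ≤ t) :
    HasSum (fun r => tdel φ f r (xst f r s) (xst f r t)) (tdL φ f s t) := by
  rw [funext (hf.apply_xst_xst_eq hs ht (tdel_self φ f) (tdel_comm φ f))]
  exact ((hasSum_ite_eq _ _).add (summable_ite_zero (summable_tdel_zero hφ hf s) _).hasSum).add
    (summable_ite_zero (summable_tdel_zero hφ hf t) _).hasSum

theorem hasSum_abs_xst_sub (hf : IsExcursion f) (hs : 0 ≤ s) (ht : 0 ≤ t) :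
    HasSum (fun r => |xst f r s - xst f r t|)
      (f s + f t - 2 * infIcc f (min s t) (max s t) - dT f s t) := by
  have hsplit := hf.apply_xst_xst_eq hs ht (D := fun _ a b => |a - b|) (by simp)
    (fun _ a b => abs_sub_comm a b)
  simp only [zero_sub, abs_neg, abs_of_nonneg (xst_nonneg _ _ _)] at hsplit
  rw [funext hsplit]
  convert ((hasSum_ite_eq (mrca f s t) _).add (summable_ite_zero (hf.summable_xst s) _).hasSum).add
    (summable_ite_zero (hf.summable_xst t) _).hasSum using 1
  obtain ⟨-, hms, hmt⟩ := hf.mrca_spec hs ht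
  rw [← hf.min_infIcc_mrca hs ht, dT, dTanc, dTanc, xst_of_pre hms, xst_of_pre hmt,
    sub_sub_sub_cancel_right, ← max_sub_min_eq_abs']
  linarith [min_add_max (infIcc f (mrca f s t) s) (infIcc f (mrca f s t) t)]

theorem hasSum_loopTerm (hφ : IsPreshuffle φ) (hf : IsExcursion f) (hs : 0 ≤ s) (ht : 0 ≤ t) :
    HasSum (loopTerm φ f s t)
      (tdV φ f s t - (f s + f t - 2 * infIcc f (min s t) (max s t))) := by
  have hvalue : tdV φ f s t - (f s + f t - 2 * infIcc f (min s t) (max s t)) = 2 * tdL φ f s t -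
      (f s + f t - 2 * infIcc f (min s t) (max s t) - dT f s t) := by
    rw [tdV]
    ring
  rw [hvalue]
  exact ((hasSum_tdel hφ hf hs ht).mul_left 2).sub (hasSum_abs_xst_sub hf hs ht)

theorem abs_loopTerm_le_jump (hφ : IsPreshuffle φ) (hf : IsExcursion f) (s t r : ℝ) :
    |loopTerm φ f s t r| ≤ jump f r := by
  have hdist : dist (loopPoint φ f r s) (loopPoint φ f r t) ≤ 1 / 2 := by
    rw [dist_eq_norm]
    simpa using AddCircle.norm_le_half_period 1 one_ne_zero
  have hJ := hf.zero_le_jump r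
  have htdel : 2 * tdel φ f r (xst f r s) (xst f r t) ∈ Icc 0 (jump f r) := by
    rw [tdel_xst_xst hφ hf]
    exact ⟨by positivity, by nlinarith⟩
  have hxst : |xst f r s - xst f r t| ≤ jump f r :=
    abs_sub_le_of_nonneg_of_le (xst_nonneg f r s) (hf.xst_le_jump r s) (xst_nonneg f r t)
      (hf.xst_le_jump r t)
  exact abs_sub_le_of_nonneg_of_le htdel.1 htdel.2 (abs_nonneg _) hxst

theorem abs_loopTerm_le_of_xst_eq_zero (hf : IsExcursion f) {ν : ℝ}
    (hν : 0 < jump f r → RootDistortionLE (φ (jump f r)) ν) (hs : xst f r s = 0) (t : ℝ) :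
    |loopTerm φ f s t r| ≤ ν * xst f r t := by
  rw [loopTerm, hs, zero_sub, abs_neg, abs_of_nonneg (xst_nonneg f r t)]
  exact abs_two_mul_tdel_zero_sub_le hf hν t

theorem abs_loopTerm_le_of_ne_mrca (hf : IsExcursion f) {ν : ℝ} (hν₀ : 0 ≤ ν)
    (hν : 0 < jump f r → RootDistortionLE (φ (jump f r)) ν) (hs : 0 ≤ s) (ht : 0 ≤ t)
    (hr : r ≠ mrca f s t) : |loopTerm φ f s t r| ≤ ν * (xst f r s + xst f r t) := by
  rcases hf.xst_eq_or_eq_zero hs ht hr with h | h | h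
  · have hx := xst_nonneg f r t
    rw [loopTerm, h, tdel_self, sub_self, abs_zero, mul_zero, sub_zero, abs_zero]
    positivity
  · rw [h, zero_add]
    exact abs_loopTerm_le_of_xst_eq_zero hf hν h t
  · rw [h, add_zero, loopTerm_comm]
    exact abs_loopTerm_le_of_xst_eq_zero hf hν h s

/-- Only the loop at the most recent common ancestor has to be bounded by its length; the others
are bounded through the distortion at the root, and the heights `xst f r t` have sum at most
`f t`. -/
theorem abs_tsum_loopTerm_sub_sum_le (hφ : IsPreshuffle φ) (hf : IsExcursion f) {ν κ C : ℝ}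
    (hν : 0 ≤ ν) (hκ : 0 ≤ κ) (hC : ∀ t, f t ≤ C) {R : Finset ℝ}
    (hR : ∀ r ∉ R, jump f r ≤ κ) (hsmall : ∀ u ∈ Ioc 0 κ, RootDistortionLE (φ u) ν)
    (hs : 0 ≤ s) (ht : 0 ≤ t) :
    |∑' r, loopTerm φ f s t r - ∑ r ∈ R, loopTerm φ f s t r| ≤ 2 * ν * C + κ := by
  have htail : ∑' r, loopTerm φ f s t r - ∑ r ∈ R, loopTerm φ f s t r =
      ∑' r, (R : Set ℝ)ᶜ.indicator (loopTerm φ f s t) r := by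
    rw [← (hasSum_loopTerm hφ hf hs ht).summable.sum_add_tsum_compl (s := R),
      add_sub_cancel_left, tsum_subtype]
  have hbound : HasSum
      (fun r => ν * (xst f r s + xst f r t) + if r = mrca f s t then κ else 0)
      (ν * (∑' r, xst f r s + ∑' r, xst f r t) + κ) :=
    (((hf.summable_xst s).hasSum.add (hf.summable_xst t).hasSum).mul_left ν).add
      (hasSum_ite_eq _ _)
  have hle : ν * (∑' r, xst f r s + ∑' r, xst f r t) + κ ≤ 2 * ν * C + κ := by
    nlinarith [(hf.tsum_xst_le s).trans (hC s), (hf.tsum_xst_le t).trans (hC t)]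
  rw [htail, ← Real.norm_eq_abs]
  refine (tsum_of_norm_bounded hbound fun r => ?_).trans hle
  have hnonneg : 0 ≤ ν * (xst f r s + xst f r t) :=
    mul_nonneg hν (add_nonneg (xst_nonneg f r s) (xst_nonneg f r t))
  by_cases hr : r ∈ R
  · rw [indicator_of_notMem (by simpa using hr), norm_zero]
    split_ifs <;> positivity
  rw [indicator_of_mem (by simpa using hr), Real.norm_eq_abs]
  split_ifs with hrm
  · linarith [(abs_loopTerm_le_jump hφ hf s t r).trans (hR r hr)]
  · rw [add_zero]
    exact abs_loopTerm_le_of_ne_mrca hf hν (fun hJ => hsmall _ ⟨hJ, hR r hr⟩) hs ht hrm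

/-! ### Finite partitions adapted to a function with one-sided limits -/

theorem exists_finset_of_locally {α : Type*} [PseudoMetricSpace α] {K : Set α} (hK : IsCompact K)
    {P : α → α → α → Prop} (h : ∀ x ∈ K, ∃ U ∈ 𝓝[K] x, ∀ u ∈ U, ∀ v ∈ U, P x u v) :
    ∃ J : Finset α, (∀ x ∈ J, x ∈ K) ∧
      ∃ δ > 0, ∀ u ∈ K, ∀ v ∈ K, dist u v < δ → ∃ x ∈ J, P x u v := by
  have hopen : ∀ x ∈ K, ∃ V : Set α, IsOpen V ∧ x ∈ V ∧ ∀ u ∈ V ∩ K, ∀ v ∈ V ∩ K, P x u v := by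
    intro x hx
    obtain ⟨U, hU, hP⟩ := h x hx
    obtain ⟨V, hVo, hxV, hVU⟩ := mem_nhdsWithin.1 hU
    exact ⟨V, hVo, hxV, fun u hu v hv => hP u (hVU hu) v (hVU hv)⟩
  choose! V hVo hxV hVP using hopen
  obtain ⟨J, hJK, hcover⟩ := hK.elim_nhds_subcover V fun x hx => (hVo x hx).mem_nhds (hxV x hx)
  rw [← iUnion_subtype (· ∈ J) fun x => V x] at hcover
  obtain ⟨δ, hδ, hball⟩ :=
    lebesgue_number_lemma_of_metric hK (fun x : J => hVo x (hJK x x.2)) hcover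
  refine ⟨J, hJK, δ, hδ, fun u hu v hv huv => ?_⟩
  obtain ⟨⟨x, hxJ⟩, hx⟩ := hball u hu
  exact ⟨x, hxJ, hVP x (hJK x hxJ) u ⟨hx (Metric.mem_ball_self hδ), hu⟩ v
    ⟨hx (Metric.mem_ball'.2 huv), hv⟩⟩

theorem exists_finset_dist_lt {α E : Type*} [PseudoMetricSpace α] [PseudoMetricSpace E]
    {K : Set α} (hK : IsCompact K) {F : α → E} {A : α → Set α}
    (hmem : ∀ x ∈ K, ∃ y, Tendsto F (𝓝[K ∩ A x] x) (𝓝 y))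
    (hcompl : ∀ x ∈ K, ∃ y, Tendsto F (𝓝[K \ A x] x) (𝓝 y)) {ε : ℝ} (hε : 0 < ε) :
    ∃ J : Finset α, (∀ x ∈ J, x ∈ K ∧ ¬ContinuousWithinAt F K x) ∧
      ∃ δ > 0, ∀ u ∈ K, ∀ v ∈ K, dist u v < δ → (∀ x ∈ J, u ∈ A x ↔ v ∈ A x) →
        dist (F u) (F v) < ε := by
  have hclose : ∀ {y u v}, dist (F u) y < ε / 2 → dist (F v) y < ε / 2 → dist (F u) (F v) < ε :=
    fun hu hv => (dist_triangle_right _ _ _).trans_lt (by linarith)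
  have hlocal : ∀ x ∈ K, ∃ U ∈ 𝓝[K] x, ∀ u ∈ U, ∀ v ∈ U,
      (¬ContinuousWithinAt F K x → (u ∈ A x ↔ v ∈ A x)) → dist (F u) (F v) < ε := by
    intro x hx
    by_cases hcont : ContinuousWithinAt F K x
    · exact ⟨_, hcont (Metric.ball_mem_nhds _ (half_pos hε)), fun u hu v hv _ => hclose hu hv⟩
    · obtain ⟨y, hy⟩ := hmem x hx
      obtain ⟨z, hz⟩ := hcompl x hx
      have hy' := hy (Metric.ball_mem_nhds y (half_pos hε))
      have hz' := hz (Metric.ball_mem_nhds z (half_pos hε))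
      rw [mem_map, nhdsWithin_inter', mem_inf_principal] at hy'
      rw [mem_map, sdiff_eq, nhdsWithin_inter', mem_inf_principal] at hz'
      refine ⟨_, inter_mem hy' hz', fun u hu v hv hiff => ?_⟩
      by_cases huA : u ∈ A x
      · exact hclose (hu.1 huA) (hv.1 ((hiff hcont).1 huA))
      · exact hclose (hu.2 huA) (hv.2 (mt (hiff hcont).2 huA))
  obtain ⟨J, hJK, δ, hδ, hJ⟩ := exists_finset_of_locally hK hlocal
  refine ⟨J.filter fun x => ¬ContinuousWithinAt F K x, fun x hx => ?_, δ, hδ,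
    fun u hu v hv huv hsep => ?_⟩
  · obtain ⟨hx, hx'⟩ := Finset.mem_filter.1 hx
    exact ⟨hJK x hx, hx'⟩
  · obtain ⟨x, hx, hP⟩ := hJ u hu v hv huv
    exact hP fun hcont => hsep x (Finset.mem_filter.2 ⟨hx, hcont⟩)

theorem IsExcursion.continuousAt_of_jump_eq_zero (hf : IsExcursion f) (ht : jump f t = 0) :
    ContinuousAt f t := by
  refine continuousAt_iff_continuous_left'_right'.2 ⟨?_, hf.tendsto_right t⟩
  have h := hf.tendsto_left t
  rwa [← sub_eq_zero.1 ht] at h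

theorem IsExcursion.exists_jump_partition (hf : IsExcursion f) {ε : ℝ} (hε : 0 < ε) :
    ∃ R : Finset ℝ, (∀ r ∈ R, 0 < jump f r) ∧ (∀ r ∉ R, jump f r ≤ ε) ∧
      ∃ δ > 0, ∀ u ∈ Icc (0 : ℝ) 1, ∀ v ∈ Icc (0 : ℝ) 1, |u - v| < δ →
        (∀ r ∈ R, u < r ↔ v < r) → |f u - f v| < ε := by
  obtain ⟨R, hR, δ, hδ, hosc⟩ := exists_finset_dist_lt (F := f) (A := Iio) (ε := ε)
    (isCompact_Icc (a := (-1 : ℝ)) (b := 1))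
    (fun x _ => ⟨lm f x, (hf.tendsto_left x).mono_left (nhdsWithin_mono x inter_subset_right)⟩)
    (fun x _ => ⟨f x, (continuousWithinAt_Ioi_iff_Ici.1 (hf.tendsto_right x)).mono
      fun v hv => show x ≤ v from not_lt.1 hv.2⟩) hε
  have hmem : ∀ {u : ℝ}, u ∈ Icc (0 : ℝ) 1 → u ∈ Icc (-1 : ℝ) 1 := fun hu =>
    ⟨neg_one_lt_zero.le.trans hu.1, hu.2⟩
  refine ⟨R, fun r hr => (hf.zero_le_jump r).lt_of_ne' fun h =>
    (hR r hr).2 (hf.continuousAt_of_jump_eq_zero h).continuousWithinAt, fun r hr => ?_, δ, hδ,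
    fun u hu v hv => hosc u (hmem hu) v (hmem hv)⟩
  rcases (hf.zero_le_jump r).eq_or_lt with h | h
  · exact h ▸ hε.le
  have hr01 := hf.mem_Ico_of_jump_pos h
  have hsep : ∀ᶠ u in 𝓝[<] r, ∀ x ∈ R, u < x ↔ r < x := by
    refine R.eventually_all.2 fun x hx => ?_
    rcases lt_or_gt_of_ne (show x ≠ r from fun hxr => hr (hxr ▸ hx)) with hxr | hxr
    · filter_upwards [Ioo_mem_nhdsLT hxr] with u hu using iff_of_false hu.1.not_gt hxr.not_gt
    · filter_upwards [self_mem_nhdsWithin] with u hu using iff_of_true (lt_trans hu hxr) hxr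
  refine le_of_tendsto ((hf.tendsto_left r).const_sub (f r)) ?_
  have hlt : max (-1) (r - δ) < r := max_lt (by linarith [hr01.1]) (sub_lt_self r hδ)
  filter_upwards [hsep, Ioo_mem_nhdsLT hlt] with u hu hur
  have hdist : dist r u < δ := by
    rw [Real.dist_eq, abs_of_pos (sub_pos.2 hur.2)]
    linarith [(le_max_right _ _).trans_lt hur.1]
  exact (le_abs_self _).trans (hosc r ⟨by linarith [hr01.1], hr01.2.le⟩ u
    ⟨(le_max_left _ _).trans hur.1.le, (hur.2.trans hr01.2).le⟩ hdist
    fun x hx => (hu x hx).symm).le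

theorem tendsto_coe_unitAddCircle_iff {p : ℝ → ℝ} {F : Filter ℝ} {y : ℝ}
    (hp : ∀ᶠ x in F, p x ∈ Icc (0 : ℝ) 1) (hy : y ∈ Icc (0 : ℝ) 1) :
    Tendsto (fun x => (p x : UnitAddCircle)) F (𝓝 y) ↔
      Tendsto (fun x => cdist (p x) y) F (𝓝 0) := by
  rw [tendsto_iff_dist_tendsto_zero]
  exact tendsto_congr' (hp.mono fun x hx => (cdist_eq_dist hx hy).symm)

theorem phiContAt.continuousWithinAt {p : ℝ → ℝ} (hp : MapsTo p (Icc 0 1) (Icc 0 1)) {x : ℝ}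
    (hx : x ∈ Icc (0 : ℝ) 1) (h : phiContAt p x) :
    ContinuousWithinAt (fun y => (p y : UnitAddCircle)) (Icc 0 1) x := by
  refine Metric.continuousWithinAt_iff'.2 fun ν hν => ?_
  obtain ⟨κ, hκ, hle⟩ := h (ν / 2) (half_pos hν)
  filter_upwards [self_mem_nhdsWithin, nhdsWithin_le_nhds (Metric.closedBall_mem_nhds x hκ)]
    with y hy hyx
  rw [← cdist_eq_dist (hp hy) (hp hx)]
  exact (hle y hy hyx).trans_lt (half_lt_self hν)

namespace IsPreshuffle

variable {Δ : ℝ}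

theorem tendsto_left (hφ : IsPreshuffle φ) (hΔ : 0 < Δ) {x : ℝ} (hx : x ∈ Ioc (0 : ℝ) 1) :
    Tendsto (fun y => (φ Δ y : UnitAddCircle)) (𝓝[<] x) (𝓝 (φ Δ x)) := by
  refine (tendsto_coe_unitAddCircle_iff ?_ (hφ.mapsTo Δ hΔ (Ioc_subset_Icc_self hx))).2
    (hφ.leftCont Δ hΔ x hx)
  filter_upwards [Ioo_mem_nhdsLT hx.1] with y hy
  exact hφ.mapsTo Δ hΔ ⟨hy.1.le, hy.2.le.trans hx.2⟩

theorem exists_tendsto_right (hφ : IsPreshuffle φ) (hΔ : 0 < Δ) {x : ℝ}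
    (hx : x ∈ Ico (0 : ℝ) 1) :
    ∃ z, Tendsto (fun y => (φ Δ y : UnitAddCircle)) (𝓝[>] x) (𝓝 z) := by
  obtain ⟨L, hL, hlim⟩ := hφ.rightLim Δ hΔ x hx
  refine ⟨(L : UnitAddCircle), (tendsto_coe_unitAddCircle_iff ?_ hL).2 hlim⟩
  filter_upwards [Ioo_mem_nhdsGT hx.2] with y hy
  exact hφ.mapsTo Δ hΔ ⟨hx.1.trans hy.1.le, hy.2.le⟩

theorem continuousWithinAt_zero (hφ : IsPreshuffle φ) (hΔ : 0 < Δ) :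
    ContinuousWithinAt (fun y => (φ Δ y : UnitAddCircle)) (Icc 0 1) 0 := by
  obtain ⟨M, hM⟩ := hφ.bdd Δ hΔ
  refine tendsto_iff_dist_tendsto_zero.2 (squeeze_zero' (.of_forall fun _ => dist_nonneg)
    (g := fun y => (M + 1) / 2 * y) ?_ ?_)
  · filter_upwards [self_mem_nhdsWithin] with y hy
    rcases hy.1.eq_or_lt with rfl | hy0
    · simp
    · have hle := (abs_le.1 (hM Δ ⟨hΔ, le_rfl⟩ y ⟨hy0, hy.2⟩)).2
      rw [dist_comm, ← cdist_eq_dist (hφ.mapsTo Δ hΔ (left_mem_Icc.2 zero_le_one))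
        (hφ.mapsTo Δ hΔ hy)]
      set c := cdist (φ Δ 0) (φ Δ y)
      have hle' : 2 / y * c ≤ M + 1 := by linarith
      rw [div_mul_eq_mul_div, div_le_iff₀ hy0] at hle'
      linarith
  · exact ((continuous_const_mul ((M + 1) / 2)).tendsto' 0 0 (mul_zero _)).mono_left
      nhdsWithin_le_nhds

theorem continuousWithinAt_one (hφ : IsPreshuffle φ) (hΔ : 0 < Δ) :
    ContinuousWithinAt (fun y => (φ Δ y : UnitAddCircle)) (Icc 0 1) 1 :=
  (continuousWithinAt_Iio_iff_Iic.1 (hφ.tendsto_left hΔ (right_mem_Ioc.2 one_pos))).mono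
    Icc_subset_Iic_self

theorem exists_position_partition (hφ : IsPreshuffle φ) (hΔ : 0 < Δ) {ε : ℝ} (hε : 0 < ε) :
    ∃ J : Finset ℝ, (∀ x ∈ J, x ∈ Ioo (0 : ℝ) 1 ∧ ¬phiContAt (φ Δ) x) ∧
      ∃ δ > 0, ∀ u ∈ Icc (0 : ℝ) 1, ∀ v ∈ Icc (0 : ℝ) 1, |u - v| < δ →
        (∀ x ∈ J, u ≤ x ↔ v ≤ x) → dist (φ Δ u : UnitAddCircle) (φ Δ v) < ε := by
  have hleft : ∀ x ∈ Icc (0 : ℝ) 1, ∃ z : UnitAddCircle,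
      Tendsto (fun y => (φ Δ y : UnitAddCircle)) (𝓝[Icc 0 1 ∩ Iic x] x) (𝓝 z) := by
    intro x hx
    refine ⟨φ Δ x, ?_⟩
    rcases hx.1.eq_or_lt with rfl | hx0
    · exact (hφ.continuousWithinAt_zero hΔ).mono inter_subset_left
    · exact (continuousWithinAt_Iio_iff_Iic.1 (hφ.tendsto_left hΔ ⟨hx0, hx.2⟩)).mono
        inter_subset_right
  have hright : ∀ x ∈ Icc (0 : ℝ) 1, ∃ z : UnitAddCircle,
      Tendsto (fun y => (φ Δ y : UnitAddCircle)) (𝓝[Icc 0 1 \ Iic x] x) (𝓝 z) := by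
    intro x hx
    rcases hx.2.eq_or_lt with rfl | hx1
    · exact ⟨0, by simp [sdiff_eq_empty.2 Icc_subset_Iic_self]⟩
    · obtain ⟨z, hz⟩ := hφ.exists_tendsto_right hΔ ⟨hx.1, hx1⟩
      exact ⟨z, hz.mono_left (nhdsWithin_mono x fun y hy => show x < y from not_le.1 hy.2)⟩
  obtain ⟨J, hJ, hosc⟩ := exists_finset_dist_lt isCompact_Icc hleft hright hε
  refine ⟨J, fun x hx => ?_, hosc⟩
  obtain ⟨hx01, hdisc⟩ := hJ x hx
  refine ⟨⟨hx01.1.lt_of_ne ?_, hx01.2.lt_of_ne ?_⟩,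
    fun h => hdisc (h.continuousWithinAt (hφ.mapsTo Δ hΔ) hx01)⟩
  · rintro rfl
    exact hdisc (hφ.continuousWithinAt_zero hΔ)
  · rintro rfl
    exact hdisc (hφ.continuousWithinAt_one hΔ)

end IsPreshuffle

/-! ### Time changes -/

theorem incBij_id : IncBij fun x => x :=
  ⟨strictMono_id.strictMonoOn _, bijOn_id _⟩

theorem IncBij.map_zero {l : ℝ → ℝ} (hl : IncBij l) : l 0 = 0 :=
  (hl.1.monotoneOn.map_isLeast (isLeast_Icc zero_le_one)).unique
    (hl.2.image_eq.symm ▸ isLeast_Icc zero_le_one)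

theorem IncBij.map_one {l : ℝ → ℝ} (hl : IncBij l) : l 1 = 1 :=
  (hl.1.monotoneOn.map_isGreatest (isGreatest_Icc zero_le_one)).unique
    (hl.2.image_eq.symm ▸ isGreatest_Icc zero_le_one)

theorem orderIso_mem_Icc_iff {L : ℝ ≃o ℝ} (h0 : L 0 = 0) (h1 : L 1 = 1) {x : ℝ} :
    L x ∈ Icc (0 : ℝ) 1 ↔ x ∈ Icc (0 : ℝ) 1 := by
  simpa only [h0, h1, mem_Icc] using
    and_congr (L.le_iff_le (x := 0) (y := x)) (L.le_iff_le (y := 1))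

theorem incBij_of_orderIso {L : ℝ ≃o ℝ} (h0 : L 0 = 0) (h1 : L 1 = 1) : IncBij L := by
  have hbij := (L.injective.injOn (s := Icc 0 1)).bijOn_image
  rw [L.image_Icc, h0, h1] at hbij
  exact ⟨L.strictMono.strictMonoOn _, hbij⟩

theorem IncBij.exists_orderIso {l : ℝ → ℝ} (hl : IncBij l) :
    ∃ L : ℝ ≃o ℝ, (∀ x ∈ Icc (0 : ℝ) 1, L x = l x) ∧ ∀ x ∉ Icc (0 : ℝ) 1, L x = x := by
  set e : ℝ → ℝ := (Icc 0 1).piecewise l id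
  have hin : ∀ x ∈ Icc (0 : ℝ) 1, e x = l x := fun x hx => piecewise_eq_of_mem _ _ _ hx
  have hout : ∀ x ∉ Icc (0 : ℝ) 1, e x = x := fun x hx => piecewise_eq_of_notMem _ _ _ hx
  have hmono : StrictMono e := by
    intro x y hxy
    by_cases hx : x ∈ Icc (0 : ℝ) 1 <;> by_cases hy : y ∈ Icc (0 : ℝ) 1
    · rw [hin x hx, hin y hy]
      exact hl.1 hx hy hxy
    · rw [hin x hx, hout y hy]
      exact (hl.2.mapsTo hx).2.trans_lt (not_le.1 fun hy1 => hy ⟨hx.1.trans hxy.le, hy1⟩)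
    · rw [hout x hx, hin y hy]
      exact (not_le.1 fun hx0 => hx ⟨hx0, hxy.le.trans hy.2⟩).trans_le (hl.2.mapsTo hy).1
    · rwa [hout x hx, hout y hy]
  have hsurj : Function.Surjective e := by
    intro y
    by_cases hy : y ∈ Icc (0 : ℝ) 1
    · obtain ⟨x, hx, rfl⟩ := hl.2.surjOn hy
      exact ⟨x, hin x hx⟩
    · exact ⟨y, hout y hy⟩
  exact ⟨hmono.orderIsoOfSurjective e hsurj, hin, hout⟩

/-- `skor` and `skorC` are the cases `D x y = |f x - g y|` and `D x y = cdist (p x) (q y)`. -/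
theorem exists_incBij_of_sInf_lt {D : ℝ → ℝ → ℝ} {b c : ℝ} (hb : 0 ≤ b) (hD : ∀ x, D x x ≤ b)
    (h : sInf {c : ℝ | 0 ≤ c ∧ ∃ l : ℝ → ℝ, IncBij l ∧
      ∀ x ∈ Icc (0 : ℝ) 1, |l x - x| ≤ c ∧ D x (l x) ≤ c} < c) :
    ∃ l, IncBij l ∧ ∀ x ∈ Icc (0 : ℝ) 1, |l x - x| ≤ c ∧ D x (l x) ≤ c := by
  obtain ⟨a, ⟨-, l, hl, hla⟩, hac⟩ := exists_lt_of_csInf_lt (by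
    exact ⟨b, hb, fun x => x, incBij_id, fun x _ => ⟨by simpa using hb, hD x⟩⟩) h
  exact ⟨l, hl, fun x hx => ⟨(hla x hx).1.trans hac.le, (hla x hx).2.trans hac.le⟩⟩

theorem exists_incBij_of_skorC_lt {p q : ℝ → ℝ} {c : ℝ} (h : skorC p q < c) :
    ∃ l, IncBij l ∧ ∀ x ∈ Icc (0 : ℝ) 1, |l x - x| ≤ c ∧ cdist (p x) (q (l x)) ≤ c :=
  exists_incBij_of_sInf_lt (D := fun x y => cdist (p x) (q y)) zero_le_one
    (fun _ => (min_le_right _ _).trans (sub_le_self 1 (abs_nonneg _))) h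

theorem IsExcursion.exists_orderIso_of_skor_lt (hf : IsExcursion f) (hg : IsExcursion g) {c : ℝ}
    (h : skor f g < c) :
    ∃ L : ℝ ≃o ℝ, L 0 = 0 ∧ L 1 = 1 ∧ ∀ x, |L x - x| ≤ c ∧ |f x - g (L x)| ≤ c := by
  obtain ⟨C, hC, hfC⟩ := hf.exists_bound
  obtain ⟨C', hC', hgC'⟩ := hg.exists_bound
  have hbound : ∀ x, |f x - g x| ≤ C + C' := fun x => by
    rw [abs_sub_le_iff]
    constructor <;> linarith [hf.apply_nonneg x, hg.apply_nonneg x, hfC x, hgC' x]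
  obtain ⟨l, hl, hlc⟩ := exists_incBij_of_sInf_lt (D := fun x y => |f x - g y|)
    (add_nonneg hC.le hC'.le) hbound h
  obtain ⟨L, hLin, hLout⟩ := hl.exists_orderIso
  have h0 : (0 : ℝ) ∈ Icc (0 : ℝ) 1 := left_mem_Icc.2 zero_le_one
  refine ⟨L, (hLin 0 h0).trans hl.map_zero,
    (hLin 1 (right_mem_Icc.2 zero_le_one)).trans hl.map_one, fun x => ?_⟩
  by_cases hx : x ∈ Icc (0 : ℝ) 1
  · rw [hLin x hx]
    exact hlc x hx
  · rw [hLout x hx, hf.zero_outside x hx, hg.zero_outside x hx, sub_self, sub_zero, abs_zero]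
    exact ⟨(abs_nonneg _).trans (hlc 0 h0).1, (abs_nonneg _).trans (hlc 0 h0).1⟩

theorem exists_orderIso_eq_add_of_lipschitzWith {d : ℝ → ℝ} {K : NNReal} (hK : K < 1)
    (hd : LipschitzWith K d) : ∃ θ : ℝ ≃o ℝ, ∀ x, θ x = x + d x := by
  have hmono : StrictMono fun x => x + d x := by
    intro x y hxy
    have hle := (neg_le_abs _).trans (hd.dist_le_mul y x)
    rw [Real.dist_eq, abs_of_pos (sub_pos.2 hxy)] at hle
    have hK' : (K : ℝ) * (y - x) < 1 * (y - x) :=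
      mul_lt_mul_of_pos_right (by exact_mod_cast hK) (sub_pos.2 hxy)
    change x + d x < y + d y
    linarith
  have hsurj : Function.Surjective fun x => x + d x := by
    intro y
    have hcontr : ContractingWith K fun x => y - d x :=
      ⟨hK, by simpa using (LipschitzWith.const y).sub hd⟩
    exact ⟨_, (eq_sub_iff_add_eq.1 hcontr.fixedPoint_isFixedPt.symm)⟩
  exact ⟨hmono.orderIsoOfSurjective _ hsurj, fun _ => rfl⟩

/-- If `ω` is small with respect to the gaps of `S`, a displacement of `S` bounded by `ω` is a
contraction, and it can be extended to the line without losing this property. -/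
theorem eventually_exists_interpolation (S : Finset ℝ) :
    ∀ᶠ ω in 𝓝[>] (0 : ℝ), ∀ a : ℝ → ℝ, (∀ T ∈ S, |a T - T| ≤ ω) →
      ∃ θ : ℝ ≃o ℝ, (∀ T ∈ S, θ T = a T) ∧ ∀ x, |θ x - x| ≤ ω := by
  have hgap : ∀ᶠ ω in 𝓝[>] (0 : ℝ), ∀ T ∈ S, ∀ T' ∈ S, T ≠ T' → 4 * ω ≤ |T - T'| := by
    refine S.eventually_all.2 fun T _ => S.eventually_all.2 fun T' _ => ?_
    rcases eq_or_ne T T' with hTT' | hTT'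
    · exact .of_forall fun ω hω => absurd hTT' hω
    · filter_upwards [Ioo_mem_nhdsGT (show 0 < |T - T'| / 4 by
        have := abs_pos.2 (sub_ne_zero.2 hTT'); positivity)] with ω hω _
      linarith [hω.2]
  filter_upwards [hgap, self_mem_nhdsWithin] with ω hgap (hω : 0 < ω) a ha
  have hlip : LipschitzOnWith (1 / 2) (fun T => a T - T) S := by
    refine .of_dist_le_mul fun T hT T' hT' => ?_
    rcases eq_or_ne T T' with rfl | hTT'
    · simp
    · rw [Real.dist_eq, Real.dist_eq, NNReal.coe_div, NNReal.coe_one, NNReal.coe_ofNat]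
      linarith [abs_sub (a T - T) (a T' - T'), ha T hT, ha T' hT', hgap T hT T' hT' hTT']
  obtain ⟨d, hd, hdS⟩ := hlip.extend_real
  obtain ⟨θ, hθ⟩ := exists_orderIso_eq_add_of_lipschitzWith
    (by rw [← NNReal.coe_lt_coe]; norm_num) ((hd.const_min ω).const_max (-ω))
  refine ⟨θ, fun T hT => ?_, fun x => ?_⟩
  · have hdT : a T - T = d T := hdS hT
    have := abs_le.1 (ha T hT)
    rw [hθ, ← hdT, min_eq_right this.2, max_eq_right this.1, add_sub_cancel]
  · rw [hθ, add_sub_cancel_left]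
    exact abs_le.2 ⟨le_max_left _ _, max_le (by linarith) (min_le_left _ _)⟩

theorem infIcc_comp_orderIso (f : ℝ → ℝ) (L : ℝ ≃o ℝ) (s t : ℝ) :
    infIcc (f ∘ L) s t = infIcc f (L s) (L t) := by
  rw [infIcc, infIcc, ← L.image_Icc, image_comp]

namespace IsExcursion

variable {L : ℝ ≃o ℝ}

theorem tendsto_comp_orderIso_left (hf : IsExcursion f) (L : ℝ ≃o ℝ) (t : ℝ) :
    Tendsto (f ∘ L) (𝓝[<] t) (𝓝 (lm f (L t))) :=
  (hf.tendsto_left (L t)).comp (L.continuous.continuousWithinAt.tendsto_nhdsWithin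
    fun _ hx => L.strictMono hx)

theorem tendsto_comp_orderIso_right (hf : IsExcursion f) (L : ℝ ≃o ℝ) (t : ℝ) :
    Tendsto (f ∘ L) (𝓝[>] t) (𝓝 (f (L t))) :=
  (hf.tendsto_right (L t)).comp (L.continuous.continuousWithinAt.tendsto_nhdsWithin
    fun _ hx => L.strictMono hx)

theorem lm_comp_orderIso (hf : IsExcursion f) (h0 : L 0 = 0) (t : ℝ) :
    lm (f ∘ L) t = lm f (L t) := by
  rcases eq_or_ne t 0 with rfl | ht
  · rw [h0, lm_zero, lm_zero]
  · rw [lm, if_neg ht]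
    exact leftLim_eq_of_tendsto (hf.tendsto_comp_orderIso_left L t)

theorem jump_comp_orderIso (hf : IsExcursion f) (h0 : L 0 = 0) (t : ℝ) :
    jump (f ∘ L) t = jump f (L t) := by
  rw [jump, hf.lm_comp_orderIso h0, jump, Function.comp_apply]

theorem comp_orderIso (hf : IsExcursion f) (h0 : L 0 = 0) (h1 : L 1 = 1) :
    IsExcursion (f ∘ L) where
  nonneg t _ := hf.apply_nonneg (L t)
  zero_outside t ht := hf.zero_outside _ (mt (orderIso_mem_Icc_iff h0 h1).1 ht)
  rightCont t _ := hf.tendsto_comp_orderIso_right L t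
  leftLimEx t ht := by
    have hlm := hf.lm_comp_orderIso h0 t
    rw [lm, if_neg ht.1.ne'] at hlm
    rw [hlm]
    exact hf.tendsto_comp_orderIso_left L t
  one := by rw [Function.comp_apply, h1, hf.one]
  jump_nonneg t _ := by
    rw [hf.jump_comp_orderIso h0]
    exact hf.zero_le_jump _

theorem xst_comp_orderIso (hf : IsExcursion f) (h0 : L 0 = 0) (s t : ℝ) :
    xst (f ∘ L) s t = xst f (L s) (L t) := by
  simp only [xst, infIcc_comp_orderIso, hf.lm_comp_orderIso h0, L.le_iff_le]

theorem loopTerm_comp_orderIso (hf : IsExcursion f) (h0 : L 0 = 0) (s t r : ℝ) :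
    loopTerm φ (f ∘ L) s t r = loopTerm φ f (L s) (L t) (L r) := by
  simp only [loopTerm, tdel, hf.xst_comp_orderIso h0, hf.jump_comp_orderIso h0]

theorem tdV_comp_orderIso (hφ : IsPreshuffle φ) (hf : IsExcursion f) (h0 : L 0 = 0)
    (h1 : L 1 = 1) (hs : 0 ≤ s) (ht : 0 ≤ t) :
    tdV φ (f ∘ L) s t = tdV φ f (L s) (L t) := by
  have hcomp := hasSum_loopTerm hφ (hf.comp_orderIso h0 h1) hs ht
  rw [funext (hf.loopTerm_comp_orderIso h0 s t), infIcc_comp_orderIso, L.monotone.map_min,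
    L.monotone.map_max] at hcomp
  have horig := L.toEquiv.hasSum_iff.2
    (hasSum_loopTerm hφ hf (s := L s) (t := L t) (h0 ▸ L.monotone hs) (h0 ▸ L.monotone ht))
  exact sub_left_inj.1 (hcomp.unique horig)

end IsExcursion

/-! ### Following a loop under a perturbation -/

/-- The trace on the set of excursions of the neighbourhoods of `f` for uniform convergence on the
line. -/
def excursionNhds (f : ℝ → ℝ) : Filter (ℝ → ℝ) :=
  ⨅ (c : ℝ) (_ : 0 < c), 𝓟 {g | IsExcursion g ∧ ∀ s, |f s - g s| ≤ c}

theorem excursionNhds_hasBasis (f : ℝ → ℝ) :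
    (excursionNhds f).HasBasis (0 < ·) fun c => {g | IsExcursion g ∧ ∀ s, |f s - g s| ≤ c} :=
  hasBasis_biInf_principal' (fun c hc d hd => ⟨min c d, lt_min hc hd,
    fun _ hg => ⟨hg.1, fun s => (hg.2 s).trans (min_le_left c d)⟩,
    fun _ hg => ⟨hg.1, fun s => (hg.2 s).trans (min_le_right c d)⟩⟩) ⟨1, one_pos⟩

theorem eventually_excursionNhds (f : ℝ → ℝ) {c : ℝ} (hc : 0 < c) :
    ∀ᶠ g in excursionNhds f, IsExcursion g ∧ ∀ s, |f s - g s| ≤ c :=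
  (excursionNhds_hasBasis f).mem_of_mem hc

/-- The loop of `f` at `r` avoids the discontinuities of the shuffle `φ`: its length is a continuity
point of `Δ ↦ φ Δ`, and the positions on it that are shared by two distinct times are continuity
points of `φ (jump f r)`. -/
structure IsRegularLoop (φ : ℝ → ℝ → ℝ) (f : ℝ → ℝ) (r : ℝ) : Prop where
  jump_pos : 0 < jump f r
  phiContAt_jump : PhiContAt φ (jump f r)
  phiContAt_loopPos : ∀ s ∈ Icc (0 : ℝ) 1, ∀ t ∈ Icc (0 : ℝ) 1, s ≠ t → xst f r s = xst f r t →
    0 < xst f r t → phiContAt (φ (jump f r)) (loopPos f r t)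

/-- `T` is the only time at its position on the loop of `f` at `r`, and this position is not an
endpoint of the loop. -/
structure IsSimpleTime (f : ℝ → ℝ) (r T : ℝ) : Prop where
  lt : r < T
  lt_one : T < 1
  xst_pos : 0 < xst f r T
  eq_of_xst_eq : ∀ s ∈ Icc (0 : ℝ) 1, xst f r s = xst f r T → s = T

/-- The shuffled loops of `f` and `g` at `r` are at distance at most `β`, through the change of
positions `σ`. -/
structure LoopMatching (φ : ℝ → ℝ → ℝ) (f g : ℝ → ℝ) (r β : ℝ) (σ : ℝ → ℝ) : Prop where
  incBij : IncBij σ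
  jump_pos : 0 < jump g r
  abs_jump_sub_le : |jump f r - jump g r| ≤ β
  abs_loopPos_sub_le : ∀ s, |loopPos f r s - loopPos g r s| ≤ β
  abs_sub_le : ∀ x ∈ Icc (0 : ℝ) 1, |σ x - x| ≤ β
  dist_le : ∀ x ∈ Icc (0 : ℝ) 1,
    dist (φ (jump f r) (σ x) : UnitAddCircle) (φ (jump g r) x) ≤ β

/-- The position of `s` on the loop of `f` at `r` and the position of `s'` on the loop of `g` at `r`
are `e`-close, before and after the shuffle, and so are the lengths of the two loops. -/
structure LoopClose (φ : ℝ → ℝ → ℝ) (f g : ℝ → ℝ) (r e s s' : ℝ) : Prop where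
  abs_jump_sub_le : |jump f r - jump g r| ≤ e
  abs_loopPos_sub_le : |loopPos f r s - loopPos g r s'| ≤ e
  dist_le : dist (loopPoint φ f r s) (loopPoint φ g r s') ≤ e

theorem IsExcursion.jump_mul_loopPos (hf : IsExcursion f) (r t : ℝ) :
    jump f r * loopPos f r t = xst f r t :=
  mul_div_cancel_of_imp' fun h => ((hf.xst_le_jump r t).trans_eq h).antisymm (xst_nonneg f r t)

theorem IsExcursion.continuousOn_loopPos (hf : IsExcursion f) (r : ℝ) :
    ContinuousOn (loopPos f r) (Ici r) :=
  (hf.continuousOn_xst r).div_const _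

theorem loopPos_of_lt (h : t < r) : loopPos f r t = 0 := by
  rw [loopPos, xst_of_lt h, zero_div]

theorem IsExcursion.abs_loopPos_sub_le (hf : IsExcursion f) (hg : IsExcursion g) {c : ℝ}
    (h : ∀ s, |f s - g s| ≤ c) (hr : 0 < jump f r) (t : ℝ) :
    |loopPos f r t - loopPos g r t| ≤ 4 * c / jump f r := by
  have hsplit : jump f r * (loopPos f r t - loopPos g r t) =
      xst f r t - xst g r t - (jump f r - jump g r) * loopPos g r t := by
    rw [mul_sub, hf.jump_mul_loopPos, sub_mul, hg.jump_mul_loopPos]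
    ring
  have hsmall : |(jump f r - jump g r) * loopPos g r t| ≤ 2 * c := by
    rw [abs_mul, abs_of_nonneg (hg.loopPos_mem r t).1]
    exact (mul_le_of_le_one_right (abs_nonneg _) (hg.loopPos_mem r t).2).trans
      (hf.abs_jump_sub_le hg h r)
  have habs : jump f r * |loopPos f r t - loopPos g r t| =
      |jump f r * (loopPos f r t - loopPos g r t)| := by rw [abs_mul, abs_of_pos hr]
  rw [le_div_iff₀' hr, habs, hsplit]
  linarith [abs_sub (xst f r t - xst g r t) ((jump f r - jump g r) * loopPos g r t),
    hf.abs_xst_sub_le hg h r t]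

theorem abs_mul_sub_mul_le {a a' b b' A B c e : ℝ} (ha : |a| ≤ A) (hb' : |b'| ≤ B)
    (haa' : |a - a'| ≤ e) (hbb' : |b - b'| ≤ c) : |a * b - a' * b'| ≤ A * c + e * B := by
  have hA : 0 ≤ A := (abs_nonneg a).trans ha
  have he : 0 ≤ e := (abs_nonneg _).trans haa'
  calc |a * b - a' * b'| = |a * (b - b') + (a - a') * b'| := by ring_nf
    _ ≤ |a| * |b - b'| + |a - a'| * |b'| := by
      simpa only [abs_mul] using abs_add_le (a * (b - b')) ((a - a') * b')
    _ ≤ A * c + e * B := by gcongr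

theorem LoopClose.abs_xst_sub_le (hf : IsExcursion f) (hg : IsExcursion g) {C e s' : ℝ}
    (hC : jump f r ≤ C) (h : LoopClose φ f g r e s s') :
    |xst f r s - xst g r s'| ≤ C * e + e := by
  rw [← hf.jump_mul_loopPos, ← hg.jump_mul_loopPos]
  have hpos := hg.loopPos_mem r s'
  simpa only [mul_one] using abs_mul_sub_mul_le ((abs_of_nonneg (hf.zero_le_jump r)).trans_le hC)
    (abs_le.2 ⟨neg_one_lt_zero.le.trans hpos.1, hpos.2⟩) h.abs_jump_sub_le h.abs_loopPos_sub_le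

theorem LoopClose.abs_tdel_sub_le (hφ : IsPreshuffle φ) (hf : IsExcursion f)
    (hg : IsExcursion g) {C e s' t' : ℝ} (hC : jump f r ≤ C) (hs : LoopClose φ f g r e s s')
    (ht : LoopClose φ f g r e t t') :
    |tdel φ f r (xst f r s) (xst f r t) - tdel φ g r (xst g r s') (xst g r t')| ≤
      C * (e + e) + e * (1 / 2) := by
  rw [tdel_xst_xst hφ hf, tdel_xst_xst hφ hg]
  refine abs_mul_sub_mul_le ((abs_of_nonneg (hf.zero_le_jump r)).trans_le hC) ?_ hs.abs_jump_sub_le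
    ((dist_dist_dist_le _ _ _ _).trans (add_le_add hs.dist_le ht.dist_le))
  rw [abs_of_nonneg dist_nonneg, dist_eq_norm]
  simpa only [abs_one] using AddCircle.norm_le_half_period (1 : ℝ) one_ne_zero

theorem LoopClose.abs_loopTerm_sub_le (hφ : IsPreshuffle φ) (hf : IsExcursion f)
    (hg : IsExcursion g) {C e s' t' : ℝ} (hC : jump f r ≤ C) (hs : LoopClose φ f g r e s s')
    (ht : LoopClose φ f g r e t t') :
    |loopTerm φ f s t r - loopTerm φ g s' t' r| ≤ (6 * C + 3) * e := by
  have hdel := abs_le.1 (hs.abs_tdel_sub_le hφ hf hg hC ht)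
  have hxs := abs_le.1 (hs.abs_xst_sub_le hf hg hC)
  have hxt := abs_le.1 (ht.abs_xst_sub_le hf hg hC)
  have hxx : |(|xst f r s - xst f r t| - |xst g r s' - xst g r t'|)| ≤ 2 * (C * e + e) :=
    (abs_abs_sub_abs_le _ _).trans (abs_le.2 ⟨by linarith, by linarith⟩)
  have hxx := abs_le.1 hxx
  unfold loopTerm
  exact abs_le.2 ⟨by linarith, by linarith⟩

theorem eventually_exists_loopMatching (hφ : IsPreshuffle φ) (hf : IsExcursion f)
    (hr : 0 < jump f r) (hc : PhiContAt φ (jump f r)) {β : ℝ} (hβ : 0 < β) :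
    ∀ᶠ g in excursionNhds f, ∃ σ, LoopMatching φ f g r β σ := by
  obtain ⟨κ, hκ, hskor⟩ := hc (β / 2) (half_pos hβ)
  have hm : 0 < min β (min κ (jump f r / 2)) := by positivity
  filter_upwards [eventually_excursionNhds f (half_pos hm),
    eventually_excursionNhds f (show 0 < β * jump f r / 4 by positivity)] with g ⟨hg, hfg⟩ ⟨_, hfg'⟩
  have hjump : |jump f r - jump g r| ≤ min β (min κ (jump f r / 2)) := by
    linarith [hf.abs_jump_sub_le hg hfg r]
  simp only [le_min_iff] at hjump
  obtain ⟨hjβ, hjκ, hjr⟩ := hjump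
  have hpos : 0 < jump g r := by linarith [le_abs_self (jump f r - jump g r)]
  obtain ⟨σ, hσ, hσc⟩ := exists_incBij_of_skorC_lt
    ((hskor _ hpos (by rwa [abs_sub_comm])).trans_lt (half_lt_self hβ))
  refine ⟨σ, hσ, hpos, hjβ, fun s => ?_, fun x hx => (hσc x hx).1, fun x hx => ?_⟩
  · refine (hf.abs_loopPos_sub_le hg hfg' hr s).trans_eq ?_
    field_simp
  · rw [dist_comm, ← cdist_eq_dist (hφ.mapsTo _ hpos hx) (hφ.mapsTo _ hr (hσ.2.mapsTo hx))]
    exact (hσc x hx).2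

namespace IsSimpleTime

variable {T : ℝ}

theorem jump_pos (hf : IsExcursion f) (hT : IsSimpleTime f r T) : 0 < jump f r :=
  hT.xst_pos.trans_le (hf.xst_le_jump r T)

theorem loopPos_lt_of_lt (hf : IsExcursion f) (hT : IsSimpleTime f r T) (hs : s ∈ Ioc T 1) :
    loopPos f r s < loopPos f r T := by
  have hr := hT.jump_pos hf
  have hs0 : 0 ≤ s := (hf.mem_Ico_of_jump_pos hr).1.trans (hT.lt.trans hs.1).le
  rw [loopPos, loopPos, div_lt_div_iff_of_pos_right hr]
  exact (hf.xst_anti hT.lt.le hs.1.le).lt_of_ne fun h => hs.1.ne' (hT.eq_of_xst_eq s ⟨hs0, hs.2⟩ h)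

theorem loopPos_lt_of_gt (hf : IsExcursion f) (hT : IsSimpleTime f r T) (hs : s ∈ Ico r T) :
    loopPos f r T < loopPos f r s := by
  have hr := hT.jump_pos hf
  have hmem : s ∈ Icc (0 : ℝ) 1 :=
    ⟨(hf.mem_Ico_of_jump_pos hr).1.trans hs.1, (hs.2.trans hT.lt_one).le⟩
  rw [loopPos, loopPos, div_lt_div_iff_of_pos_right hr]
  exact (hf.xst_anti hs.1 hs.2.le).lt_of_ne fun h => hs.2.ne (hT.eq_of_xst_eq s hmem h.symm)

theorem loopPos_le_iff (hf : IsExcursion f) (hT : IsSimpleTime f r T) (hs : s ∈ Icc r 1) :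
    loopPos f r s ≤ loopPos f r T ↔ T ≤ s := by
  refine ⟨fun h => not_lt.1 fun hlt => h.not_gt (hT.loopPos_lt_of_gt hf ⟨hs.1, hlt⟩), fun h => ?_⟩
  rcases h.eq_or_lt with rfl | hlt
  · exact le_rfl
  · exact (hT.loopPos_lt_of_lt hf ⟨hlt, hs.2⟩).le

theorem eventually_abs_sub_le (hf : IsExcursion f) (hT : IsSimpleTime f r T) {ω : ℝ}
    (hω : 0 < ω) :
    ∀ᶠ β in 𝓝[>] (0 : ℝ), ∀ (Y : ℝ → ℝ) (a : ℝ), (∀ s, |Y s - loopPos f r s| ≤ β) →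
      (∀ s ≥ r, Y s ≤ loopPos f r T ↔ a ≤ s) → |a - T| ≤ ω := by
  set b := min (T + ω) 1
  set c := max r (T - ω)
  have hTb : T < b := lt_min (lt_add_of_pos_right T hω) hT.lt_one
  have hcT : c < T := max_lt hT.lt (sub_lt_self T hω)
  have hgap : 0 < min (loopPos f r T - loopPos f r b) (loopPos f r c - loopPos f r T) :=
    lt_min (sub_pos.2 (hT.loopPos_lt_of_lt hf ⟨hTb, min_le_right _ _⟩))
      (sub_pos.2 (hT.loopPos_lt_of_gt hf ⟨le_max_left _ _, hcT⟩))
  filter_upwards [Ioo_mem_nhdsGT hgap] with β hβ Y a hY ha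
  obtain ⟨hβb, hβc⟩ := lt_min_iff.1 hβ.2
  have hab : a ≤ b := (ha b (hT.lt.trans hTb).le).1 (by linarith [abs_le.1 (hY b)])
  have hca : c ≤ a := by
    by_contra! hac
    linarith [(ha c (le_max_left _ _)).2 hac.le, abs_le.1 (hY c)]
  exact abs_sub_le_iff.2 ⟨by linarith [min_le_left (T + ω) 1],
    by linarith [le_max_right r (T - ω)]⟩

theorem jump_eq_zero (hf : IsExcursion f) (hT : IsSimpleTime f r T) : jump f T = 0 := by
  by_contra hne
  have hjump : 0 < jump f T := (hf.zero_le_jump T).lt_of_ne' hne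
  obtain ⟨u, hTu, hu⟩ := mem_nhdsGT_iff_exists_Ioo_subset.1
    ((hf.tendsto_right T).eventually (lt_mem_nhds (sub_pos.1 hjump)))
  obtain ⟨v, hTv, hvu⟩ := exists_between (lt_min hTu hT.lt_one)
  obtain ⟨hvu, hv1⟩ := lt_min_iff.1 hvu
  have hpre : pre f T v := by
    refine ⟨hTv.le, le_infIcc hTv.le fun w hw => ?_⟩
    rcases hw.1.eq_or_lt with rfl | hTw
    · exact hf.lm_le _
    · exact (hu ⟨hTw, hw.2.trans_lt hvu⟩ : lm f T < f w).le
  have hv0 : 0 ≤ v := (hf.mem_Ico_of_jump_pos hjump).1.trans hTv.le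
  exact hTv.ne' (hT.eq_of_xst_eq v ⟨hv0, hv1.le⟩ (hf.xst_eq_of_pre hT.lt hpre))

end IsSimpleTime

theorem IsRegularLoop.isSimpleTime (hf : IsExcursion f) (hr : IsRegularLoop φ f r) {T : ℝ}
    (hT : T ∈ Icc r 1) (hx : loopPos f r T ∈ Ioo (0 : ℝ) 1)
    (hdisc : ¬phiContAt (φ (jump f r)) (loopPos f r T)) : IsSimpleTime f r T := by
  have hpos := hr.jump_pos
  have hxst : 0 < xst f r T := by
    rw [← hf.jump_mul_loopPos]
    exact mul_pos hpos hx.1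
  refine ⟨hT.1.lt_of_ne fun h => ?_, hT.2.lt_of_ne fun h => ?_, hxst, fun s hs hst => ?_⟩
  · refine hx.2.ne ?_
    rw [← h, loopPos, hf.xst_self, div_self hpos.ne']
  · exact hxst.ne' (by rw [h, hf.xst_one])
  · by_contra hne
    exact hdisc (hr.phiContAt_loopPos s hs T
      ⟨(hf.mem_Ico_of_jump_pos hpos).1.trans hT.1, hT.2⟩ hne hst hxst)

theorem IsRegularLoop.exists_simpleTimes (hφ : IsPreshuffle φ) (hf : IsExcursion f)
    (hr : IsRegularLoop φ f r) {ε : ℝ} (hε : 0 < ε) :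
    ∃ N : Finset ℝ, (∀ T ∈ N, IsSimpleTime f r T) ∧
      ∃ δ > 0, ∀ u ∈ Icc (0 : ℝ) 1, ∀ v ∈ Icc (0 : ℝ) 1, |u - v| < δ →
        (∀ T ∈ N, u ≤ loopPos f r T ↔ v ≤ loopPos f r T) →
        dist (φ (jump f r) u : UnitAddCircle) (φ (jump f r) v) < ε := by
  have hpos := hr.jump_pos
  obtain ⟨J, hJ, δ, hδ, hosc⟩ := hφ.exists_position_partition hpos hε
  have htime : ∀ x ∈ J, ∃ T ∈ Icc r 1, loopPos f r T = x := by
    intro x hx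
    refine intermediate_value_Icc' (hf.mem_Ico_of_jump_pos hpos).2.le
      ((hf.continuousOn_loopPos r).mono Icc_subset_Ici_self) ?_
    rw [loopPos, loopPos, hf.xst_one, hf.xst_self, zero_div, div_self hpos.ne']
    exact Ioo_subset_Icc_self (hJ x hx).1
  choose! T hT hTx using htime
  refine ⟨J.image T, Finset.forall_mem_image.2 fun x hx => ?_, δ, hδ, fun u hu v hv huv h =>
    hosc u hu v hv huv fun x hx => ?_⟩
  · refine hr.isSimpleTime hf (hT x hx) ?_ ?_ <;> rw [hTx x hx]
    exacts [(hJ x hx).1, (hJ x hx).2]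
  · simpa only [hTx x hx] using h (T x) (Finset.mem_image_of_mem T hx)

theorem IsExcursion.exists_loopPos_le_iff (hf : IsExcursion f) (hr : r ≤ 1) {y : ℝ}
    (hy : 0 ≤ y) : ∃ a ≥ r, ∀ s ≥ r, loopPos f r s ≤ y ↔ a ≤ s := by
  set A := Ici r ∩ loopPos f r ⁻¹' Iic y
  have hclosed : IsClosed A :=
    (hf.continuousOn_loopPos r).preimage_isClosed_of_isClosed isClosed_Ici isClosed_Iic
  have hone : loopPos f r 1 ≤ y := by rwa [loopPos, hf.xst_one, zero_div]
  have hbdd : BddBelow A := ⟨r, fun _ hs => hs.1⟩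
  obtain ⟨har, ha⟩ := hclosed.csInf_mem ⟨1, hr, hone⟩ hbdd
  refine ⟨sInf A, har, fun s hs => ⟨fun h => csInf_le hbdd ⟨hs, h⟩, fun h => le_trans ?_ ha⟩⟩
  exact div_le_div_of_nonneg_right (hf.xst_anti har h) (hf.zero_le_jump r)

namespace LoopMatching

variable {β : ℝ} {σ : ℝ → ℝ}

theorem map_loopPos_mem (hM : LoopMatching φ f g r β σ) (hg : IsExcursion g) (s : ℝ) :
    σ (loopPos g r s) ∈ Icc (0 : ℝ) 1 :=
  hM.incBij.2.mapsTo (hg.loopPos_mem r s)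

theorem abs_map_loopPos_sub_le (hM : LoopMatching φ f g r β σ) (hg : IsExcursion g) (s : ℝ) :
    |σ (loopPos g r s) - loopPos f r s| ≤ 2 * β := by
  have hσ := abs_le.1 (hM.abs_sub_le _ (hg.loopPos_mem r s))
  have hpos := abs_le.1 (hM.abs_loopPos_sub_le s)
  exact abs_le.2 ⟨by linarith, by linarith⟩

theorem exists_map_loopPos_le_iff (hM : LoopMatching φ f g r β σ) (hg : IsExcursion g) {y : ℝ}
    (hy : y ∈ Icc (0 : ℝ) 1) : ∃ a ≥ r, ∀ s ≥ r, σ (loopPos g r s) ≤ y ↔ a ≤ s := by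
  obtain ⟨x, hx, rfl⟩ := hM.incBij.2.surjOn hy
  obtain ⟨a, har, ha⟩ :=
    hg.exists_loopPos_le_iff (hg.mem_Ico_of_jump_pos hM.jump_pos).2.le hx.1
  refine ⟨a, har, fun s hs => ?_⟩
  rw [hM.incBij.1.le_iff_le (hg.loopPos_mem r s) hx, ha s hs]

theorem loopClose (hM : LoopMatching φ f g r β σ) (hg : IsExcursion g)
    {γ e s s' : ℝ} (hβ : β ≤ γ) (hγ : 2 * γ ≤ e) (hpos : |loopPos f r s - loopPos f r s'| ≤ γ)
    (hdist : dist (φ (jump f r) (loopPos f r s) : UnitAddCircle)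
      (φ (jump f r) (σ (loopPos g r s'))) ≤ e / 2) :
    LoopClose φ f g r e s s' where
  abs_jump_sub_le := by linarith [hM.abs_jump_sub_le, abs_nonneg (jump f r - jump g r)]
  abs_loopPos_sub_le := by
    linarith [_root_.abs_sub_le (loopPos f r s) (loopPos f r s') (loopPos g r s'),
      hM.abs_loopPos_sub_le s']
  dist_le := by
    have htri := dist_triangle (loopPoint φ f r s)
      (φ (jump f r) (σ (loopPos g r s')) : UnitAddCircle) (loopPoint φ g r s')
    have hmatch := hM.dist_le _ (hg.loopPos_mem r s')
    unfold loopPoint at htri ⊢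
    linarith

end LoopMatching

theorem LoopMatching.loopClose_orderIso {β : ℝ} {σ : ℝ → ℝ} (hM : LoopMatching φ f g r β σ)
    (hf : IsExcursion f) (hg : IsExcursion g) {N : Finset ℝ} (hN : ∀ T ∈ N, IsSimpleTime f r T)
    {γ δ e : ℝ} (hβ : β ≤ γ) (hγδ : 3 * γ < δ) (hγe : 2 * γ ≤ e)
    (hosc : ∀ u ∈ Icc (0 : ℝ) 1, ∀ v ∈ Icc (0 : ℝ) 1, |u - v| < δ →
      (∀ T ∈ N, u ≤ loopPos f r T ↔ v ≤ loopPos f r T) →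
      dist (φ (jump f r) u : UnitAddCircle) (φ (jump f r) v) < e / 2)
    {θ : ℝ ≃o ℝ} (hθr : θ r = r)
    (hθN : ∀ T ∈ N, ∀ s ≥ r, σ (loopPos g r s) ≤ loopPos f r T ↔ θ T ≤ s)
    (hs : s ≤ 1) (hpos : |loopPos f r s - loopPos f r (θ s)| ≤ γ) :
    LoopClose φ f g r e s (θ s) := by
  refine hM.loopClose hg hβ hγe hpos ?_
  rcases lt_or_ge s r with hsr | hrs
  · have hθs : θ s < r := hθr ▸ θ.strictMono hsr
    rw [loopPos_of_lt hsr, loopPos_of_lt hθs, hM.incBij.map_zero, dist_self]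
    linarith [abs_nonneg (loopPos f r s - loopPos f r (θ s))]
  · refine (hosc _ (hf.loopPos_mem r s) _ (hM.map_loopPos_mem hg _) ?_ fun T hT => ?_).le
    · have hmap := abs_le.1 (hM.abs_map_loopPos_sub_le hg (θ s))
      have hpos := abs_le.1 hpos
      exact (abs_le.2 ⟨by linarith, by linarith⟩ : _ ≤ 3 * γ).trans_lt hγδ
    · have hrθ : r ≤ θ s := hθr ▸ θ.monotone hrs
      rw [(hN T hT).loopPos_le_iff hf ⟨hrs, hs⟩, hθN T hT _ hrθ, θ.le_iff_le]

theorem IsExcursion.exists_abs_loopPos_sub_le (hf : IsExcursion f) (r : ℝ) {γ : ℝ}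
    (hγ : 0 < γ) :
    ∃ ω > 0, ∀ θ : ℝ ≃o ℝ, θ r = r → θ 1 = 1 → (∀ x, |θ x - x| ≤ ω) →
      ∀ s ≤ 1, |loopPos f r s - loopPos f r (θ s)| ≤ γ := by
  have hunif : UniformContinuousOn (loopPos f r) (Icc r 1) :=
    isCompact_Icc.uniformContinuousOn_of_continuous
      ((hf.continuousOn_loopPos r).mono Icc_subset_Ici_self)
  obtain ⟨ω, hω, hunif⟩ := Metric.uniformContinuousOn_iff_le.1 hunif γ hγ
  refine ⟨ω, hω, fun θ hθr hθ1 hθ s hs => ?_⟩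
  rcases lt_or_ge s r with hsr | hrs
  · rw [loopPos_of_lt hsr, loopPos_of_lt (hθr ▸ θ.strictMono hsr), sub_self, abs_zero]
    exact hγ.le
  · refine hunif s ⟨hrs, hs⟩ (θ s) ⟨hθr ▸ θ.monotone hrs, hθ1 ▸ θ.monotone hs⟩ ?_
    rw [dist_comm]
    exact hθ s

/-- `a T` is the time at which the loop of `g` crosses the discontinuity of its shuffle map that
corresponds to the position of `T` on the loop of `f`. -/
theorem IsRegularLoop.exists_tracking (hφ : IsPreshuffle φ) (hf : IsExcursion f)
    (hr : IsRegularLoop φ f r) {ε : ℝ} (hε : 0 < ε) :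
    ∃ N : Finset ℝ, (∀ T ∈ N, IsSimpleTime f r T) ∧ ∃ ω > 0, ∀ ω' > 0,
      ∀ᶠ g in excursionNhds f, ∃ a : ℝ → ℝ, (∀ T ∈ N, |a T - T| ≤ ω') ∧
        ∀ θ : ℝ ≃o ℝ, θ r = r → θ 1 = 1 → (∀ T ∈ N, θ T = a T) → (∀ x, |θ x - x| ≤ ω) →
          ∀ s ≤ 1, LoopClose φ f g r ε s (θ s) := by
  obtain ⟨N, hN, δ, hδ, hosc⟩ := hr.exists_simpleTimes hφ hf (half_pos hε)
  obtain ⟨γ, hγ, hγlt⟩ := exists_between (show 0 < min (δ / 3) (ε / 2) by positivity)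
  obtain ⟨hγδ, hγε⟩ := lt_min_iff.1 hγlt
  obtain ⟨ω, hω, hpos⟩ := hf.exists_abs_loopPos_sub_le r hγ
  refine ⟨N, hN, ω, hω, fun ω' hω' => ?_⟩
  obtain ⟨β, hβN, hβ, hβγ⟩ := (((Finset.eventually_all N).2 fun T hT =>
    (hN T hT).eventually_abs_sub_le hf hω').and (Ioo_mem_nhdsGT hγ)).exists
  filter_upwards [eventually_exists_loopMatching hφ hf hr.jump_pos hr.phiContAt_jump (half_pos hβ),
    eventually_excursionNhds f one_pos] with g ⟨σ, hM⟩ ⟨hg, _⟩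
  choose a ha using fun T => hM.exists_map_loopPos_le_iff hg (hf.loopPos_mem r T)
  refine ⟨a, fun T hT => hβN T hT _ _ (fun s => ?_) (ha T).2, fun θ hθr hθ1 hθN hθ s hs => ?_⟩
  · simpa only [mul_div_cancel₀ β two_ne_zero] using hM.abs_map_loopPos_sub_le hg s
  · refine hM.loopClose_orderIso hf hg hN (by linarith) (by linarith) (by linarith) hosc hθr
      (fun T hT => ?_) hs (hpos θ hθr hθ1 hθ s hs)
    rw [hθN T hT]
    exact (ha T).2

/-! ### Gluing the time changes -/

theorem IsSimpleTime.root_unique (hf : IsExcursion f) {T : ℝ} (hr : IsSimpleTime f r T)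
    (hs : IsSimpleTime f s T) : r = s := by
  wlog hrs : r ≤ s generalizing r s
  · exact (this hs hr (le_of_not_ge hrs)).symm
  refine hrs.eq_or_lt.resolve_right fun hlt => hs.lt.ne (hr.eq_of_xst_eq s ?_ ?_)
  · exact Ico_subset_Icc_self (hf.mem_Ico_of_jump_pos (hs.jump_pos hf))
  · exact (hf.xst_eq_of_pre hlt (pre_of_xst_pos hs.xst_pos)).symm

theorem exists_eq_of_pairwiseDisjoint {R : Finset ℝ} {N : ℝ → Finset ℝ}
    (hN : (R : Set ℝ).PairwiseDisjoint N) (a : ℝ → ℝ → ℝ) :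
    ∃ b : ℝ → ℝ, (∀ r ∈ R, ∀ T ∈ N r, b T = a r T) ∧ ∀ T ∉ R.biUnion N, b T = T := by
  classical
  refine ⟨fun T => if h : ∃ r ∈ R, T ∈ N r then a h.choose T else T, fun r hr T hT => ?_,
    fun T hT => dif_neg (mt Finset.mem_biUnion.2 hT)⟩
  have h : ∃ r ∈ R, T ∈ N r := ⟨r, hr, hT⟩
  have hroot : h.choose = r := hN.elim_finset h.choose_spec.1 hr T h.choose_spec.2 hT
  simp only [dif_pos h, hroot]

theorem eventually_exists_loopClose (hφ : IsPreshuffle φ) (hf : IsExcursion f) {R : Finset ℝ}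
    (hR : ∀ r ∈ R, IsRegularLoop φ f r) {e w : ℝ} (he : 0 < e) (hw : 0 < w) :
    ∀ᶠ g in excursionNhds f, ∃ θ : ℝ ≃o ℝ, θ 0 = 0 ∧ θ 1 = 1 ∧ (∀ r ∈ R, θ r = r) ∧
      (∀ x, |θ x - x| ≤ w) ∧ ∀ r ∈ R, ∀ s ≤ 1, LoopClose φ f g r e s (θ s) := by
  choose! N hN ω hω htrack using fun r hr => (hR r hr).exists_tracking hφ hf he
  have hdisj : (R : Set ℝ).PairwiseDisjoint N := fun r hr s hs hrs =>
    Finset.disjoint_left.2 fun T hTr hTs => hrs ((hN r hr T hTr).root_unique hf (hN s hs T hTs))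
  have hfixed : ∀ T ∈ insert 0 (insert 1 R), T ∉ R.biUnion N := by
    intro T hT hTN
    obtain ⟨r, hr, hTr⟩ := Finset.mem_biUnion.1 hTN
    have hsimple := hN r hr T hTr
    simp only [Finset.mem_insert] at hT
    rcases hT with rfl | rfl | hTR
    · exact hsimple.lt.not_ge (hf.mem_Ico_of_jump_pos (hR r hr).jump_pos).1
    · exact hsimple.lt_one.false
    · exact (hR T hTR).jump_pos.ne' (hsimple.jump_eq_zero hf)
  obtain ⟨w', ⟨hinterp, hw'0, hw'⟩, hw'ω⟩ :=
    (((eventually_exists_interpolation (insert 0 (insert 1 R) ∪ R.biUnion N)).and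
      (Ioo_mem_nhdsGT hw)).and (R.eventually_all.2 fun r hr => Ioo_mem_nhdsGT (hω r hr))).exists
  filter_upwards [R.eventually_all.2 fun r hr => htrack r hr w' hw'0] with g hg
  choose! a ha hclose using hg
  obtain ⟨b, hbN, hb⟩ := exists_eq_of_pairwiseDisjoint hdisj a
  obtain ⟨θ, hθb, hθ⟩ := hinterp b fun T _ => by
    by_cases hTN : T ∈ R.biUnion N
    · obtain ⟨r, hr, hTr⟩ := Finset.mem_biUnion.1 hTN
      exact hbN r hr T hTr ▸ ha r hr T hTr
    · rw [hb T hTN, sub_self, abs_zero]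
      exact hw'0.le
  have hθfixed : ∀ T ∈ insert 0 (insert 1 R), θ T = T := fun T hT =>
    (hθb T (Finset.mem_union_left _ hT)).trans (hb T (hfixed T hT))
  have hθ1 : θ 1 = 1 := hθfixed 1 (by simp)
  have hθR : ∀ r ∈ R, θ r = r := fun r hr => hθfixed r (by simp [hr])
  refine ⟨θ, hθfixed 0 (by simp), hθ1, hθR, fun x => (hθ x).trans hw'.le, fun r hr =>
    hclose r hr θ (hθR r hr) hθ1 (fun T hT => ?_) fun x => (hθ x).trans (hw'ω r hr).2.le⟩
  rw [hθb T (Finset.mem_union_right _ (Finset.mem_biUnion.2 ⟨r, hr, hT⟩)), hbN r hr T hT]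

theorem abs_tdV_sub_le (hφ : IsPreshuffle φ) (hf : IsExcursion f) (hg : IsExcursion g)
    {θ : ℝ ≃o ℝ} (h0 : θ 0 = 0) (h1 : θ 1 = 1) {c C e κ ν : ℝ} (hν : 0 ≤ ν) (hκ : 0 ≤ κ)
    (hfC : ∀ t, f t ≤ C) (hgC : ∀ t, g t ≤ C) (hfg : ∀ u ∈ Icc (0 : ℝ) 1, |f u - g (θ u)| ≤ c)
    {R : Finset ℝ} (hfR : ∀ r ∉ R, jump f r ≤ κ) (hgR : ∀ r ∉ R, jump g r ≤ κ)
    (hsmall : ∀ u ∈ Ioc 0 κ, RootDistortionLE (φ u) ν)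
    (hclose : ∀ r ∈ R, ∀ s ≤ 1, LoopClose φ f g r e s (θ s))
    (hs : s ∈ Icc (0 : ℝ) 1) (ht : t ∈ Icc (0 : ℝ) 1) :
    |tdV φ f s t - tdV φ g (θ s) (θ t)| ≤
      4 * c + 2 * (2 * ν * C + κ) + R.card * ((6 * C + 3) * e) := by
  have hθs := (orderIso_mem_Icc_iff h0 h1).2 hs
  have hθt := (orderIso_mem_Icc_iff h0 h1).2 ht
  have hf_tail := abs_tsum_loopTerm_sub_sum_le hφ hf hν hκ hfC hfR hsmall hs.1 ht.1
  have hg_tail := abs_tsum_loopTerm_sub_sum_le hφ hg hν hκ hgC hgR hsmall hθs.1 hθt.1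
  rw [(hasSum_loopTerm hφ hf hs.1 ht.1).tsum_eq] at hf_tail
  rw [(hasSum_loopTerm hφ hg hθs.1 hθt.1).tsum_eq, ← θ.monotone.map_min, ← θ.monotone.map_max,
    ← infIcc_comp_orderIso] at hg_tail
  have hsum : |∑ r ∈ R, loopTerm φ f s t r - ∑ r ∈ R, loopTerm φ g (θ s) (θ t) r| ≤
      R.card * ((6 * C + 3) * e) := by
    rw [← Finset.sum_sub_distrib, ← nsmul_eq_mul]
    exact (Finset.abs_sum_le_sum_abs _ _).trans (Finset.sum_le_card_nsmul _ _ _ fun r hr =>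
      (hclose r hr s hs.2).abs_loopTerm_sub_le hφ hf hg ((hf.jump_le r).trans (hfC r))
        (hclose r hr t ht.2))
  have hinf := hf.abs_infIcc_sub_le (hg.comp_orderIso h0 h1) (min_le_max (a := s) (b := t))
    fun u hu => hfg u ⟨(le_min hs.1 ht.1).trans hu.1, hu.2.trans (max_le hs.2 ht.2)⟩
  have hfgs := hfg s hs
  have hfgt := hfg t ht
  simp only [abs_le] at hf_tail hg_tail hsum hinf hfgs hfgt ⊢
  constructor <;> linarith

theorem IsExcursion.exists_abs_sub_apply_orderIso_le (hf : IsExcursion f) {ε : ℝ} (hε : 0 < ε) :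
    ∃ R : Finset ℝ, (∀ r ∈ R, 0 < jump f r) ∧ (∀ r ∉ R, jump f r ≤ ε) ∧
      ∃ δ > 0, ∀ θ : ℝ ≃o ℝ, θ 0 = 0 → θ 1 = 1 → (∀ r ∈ R, θ r = r) → (∀ x, |θ x - x| ≤ δ) →
        ∀ u ∈ Icc (0 : ℝ) 1, |f u - f (θ u)| ≤ ε := by
  obtain ⟨R, hR, hfR, δ, hδ, hosc⟩ := hf.exists_jump_partition hε
  refine ⟨R, hR, hfR, δ / 2, half_pos hδ, fun θ h0 h1 hθR hθ u hu =>
    (hosc u hu (θ u) ((orderIso_mem_Icc_iff h0 h1).2 hu) ?_ fun r hr => ?_).le⟩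
  · rw [abs_sub_comm]
    exact (hθ u).trans_lt (half_lt_self hδ)
  · rw [← θ.lt_iff_lt (x := u), hθR r hr]

theorem eventually_exists_timeChange (hφ : IsPreshuffle φ) (hf : IsExcursion f)
    (hreg : ∀ r, 0 < jump f r → IsRegularLoop φ f r) {ε : ℝ} (hε : 0 < ε) :
    ∀ᶠ g in excursionNhds f, ∃ θ : ℝ ≃o ℝ, θ 0 = 0 ∧ θ 1 = 1 ∧ (∀ x, |θ x - x| ≤ ε) ∧
      ∀ s ∈ Icc (0 : ℝ) 1, ∀ t ∈ Icc (0 : ℝ) 1, |tdV φ f s t - tdV φ g (θ s) (θ t)| ≤ ε := by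
  obtain ⟨C, hC, hfC⟩ := hf.exists_bound
  set ν := ε / (16 * (C + 1)) with hν
  have hν0 : 0 < ν := by positivity
  obtain ⟨Δ₀, hΔ₀, hsmall⟩ := hφ.small ν hν0
  set κ := min (ε / 12) Δ₀
  have hκ0 : 0 < κ := by positivity
  obtain ⟨R, hR, hfR, δ, hδ, hosc⟩ := hf.exists_abs_sub_apply_orderIso_le (half_pos hκ0)
  set e := ε / (4 * (R.card + 1) * (6 * (C + 1) + 3)) with he
  have he0 : 0 < e := by positivity
  filter_upwards [eventually_exists_loopClose hφ hf (fun r hr => hreg r (hR r hr)) he0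
    (lt_min hε hδ), eventually_excursionNhds f one_pos,
    eventually_excursionNhds f (show 0 < κ / 4 by positivity)]
    with g ⟨θ, h0, h1, hθR, hθ, hclose⟩ ⟨hg, hfg1⟩ ⟨_, hfg⟩
  refine ⟨θ, h0, h1, fun x => (hθ x).trans (min_le_left _ _), fun s hs t ht => ?_⟩
  have hfgθ : ∀ u ∈ Icc (0 : ℝ) 1, |f u - g (θ u)| ≤ κ := fun u hu => by
    linarith [hosc θ h0 h1 hθR (fun x => (hθ x).trans (min_le_right _ _)) u hu, hfg (θ u),
      abs_sub_le (f u) (f (θ u)) (g (θ u))]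
  refine (abs_tdV_sub_le hφ hf hg h0 h1 (C := C + 1) hν0.le hκ0.le (fun t => ?_) (fun t => ?_) hfgθ
    (fun r hr => ?_) (fun r hr => ?_) (fun u hu => hsmall u ⟨hu.1, hu.2.trans (min_le_right _ _)⟩)
    hclose hs ht).trans ?_
  · linarith [hfC t]
  · linarith [hfC t, (abs_le.1 (hfg1 t)).1]
  · linarith [hfR r hr]
  · linarith [hfR r hr, (abs_le.1 (hf.abs_jump_sub_le hg hfg r)).1]
  · have hκε : κ ≤ ε / 12 := min_le_left _ _
    have hνC : 2 * ν * (C + 1) = ε / 8 := by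
      rw [hν]
      field_simp
      norm_num
    have hcard : R.card * ((6 * (C + 1) + 3) * e) ≤ ε / 4 := by
      calc R.card * ((6 * (C + 1) + 3) * e) ≤ (R.card + 1) * ((6 * (C + 1) + 3) * e) := by
            gcongr
            linarith
        _ = ε / 4 := by
            rw [he]
            field_simp
    linarith

theorem rho2_le_of_orderIso {p q : ℝ → ℝ → ℝ} {ε : ℝ} {θ : ℝ ≃o ℝ} (h0 : θ 0 = 0)
    (h1 : θ 1 = 1) (hθ : ∀ x, |θ x - x| ≤ ε)
    (hpq : ∀ s ∈ Icc (0 : ℝ) 1, ∀ t ∈ Icc (0 : ℝ) 1, |p s t - q (θ s) (θ t)| ≤ ε) :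
    rho2 p q ≤ ε :=
  csInf_le ⟨0, fun _ hc => hc.1⟩ ⟨(abs_nonneg _).trans (hθ 0), θ, θ, incBij_of_orderIso h0 h1,
    incBij_of_orderIso h0 h1, fun x _ => ⟨hθ x, hθ x⟩, hpq⟩

end

theorem statement15_general {φ : ℝ → ℝ → ℝ} {f : ℝ → ℝ} (hφ : IsPreshuffle φ) (hf : IsExcursion f)
    (hreg : ∀ r, 0 < jump f r → IsRegularLoop φ f r) :
    ∀ ε > (0 : ℝ), ∃ η > (0 : ℝ), ∀ g : ℝ → ℝ, IsExcursion g → skor f g ≤ η →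
      rho2 (tdV φ f) (tdV φ g) ≤ ε := by
  intro ε hε
  obtain ⟨c, hc, hnear⟩ := (excursionNhds_hasBasis f).eventually_iff.1
    (eventually_exists_timeChange hφ hf hreg (half_pos hε))
  obtain ⟨η, hη, hηlt⟩ := exists_between (lt_min hc (half_pos hε))
  refine ⟨η, hη, fun g hg hfg => ?_⟩
  obtain ⟨L, hL0, hL1, hL⟩ := hf.exists_orderIso_of_skor_lt hg (hfg.trans_lt hηlt)
  obtain ⟨θ, h0, h1, hθ, hV⟩ :=
    hnear ⟨hg.comp_orderIso hL0 hL1, fun s => (hL s).2.trans (min_le_left _ _)⟩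
  refine rho2_le_of_orderIso (θ := θ.trans L) ?_ ?_ (fun x => ?_) fun s hs t ht => ?_
  · rw [OrderIso.trans_apply, h0, hL0]
  · rw [OrderIso.trans_apply, h1, hL1]
  · rw [OrderIso.trans_apply]
    linarith [abs_sub_le (L (θ x)) (θ x) x, hθ x, (hL (θ x)).1, min_le_right c (ε / 2)]
  · rw [OrderIso.trans_apply, OrderIso.trans_apply, ← hg.tdV_comp_orderIso hφ hL0 hL1
      ((orderIso_mem_Icc_iff h0 h1).2 hs).1 ((orderIso_mem_Icc_iff h0 h1).2 ht).1]
    exact (hV s hs t ht).trans (half_le_self hε.le)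

theorem statement15 (φ : ℝ → ℝ → ℝ) (hφ : IsShuffle φ) (f : ℝ → ℝ) (hf : IsExcursion f)
    (hB1 : ∀ t ∈ Icc (0:ℝ) 1, 0 < jump f t → PhiContAt φ (jump f t))
    (hB2 : ∀ r ∈ Icc (0:ℝ) 1, ∀ s ∈ Icc (0:ℝ) 1, ∀ t ∈ Icc (0:ℝ) 1,
        s ≠ t → 0 < jump f r → xst f r s = xst f r t → 0 < xst f r t →
        phiContAt (φ (jump f r)) (xst f r t / jump f r)) :
    ∀ ε > (0:ℝ), ∃ η > (0:ℝ), ∀ g : ℝ → ℝ, IsExcursion g → skor f g ≤ η →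
      rho2 (tdV φ f) (tdV φ g) ≤ ε :=
  statement15_general hφ.isPreshuffle hf fun r hr =>
    have hr01 := Ico_subset_Icc_self (hf.mem_Ico_of_jump_pos hr)
    ⟨hr, hB1 r hr01 hr, fun s hs t ht hst => hB2 r hr01 s hs t ht hst hr⟩
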